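/- arXiv:2102.06935 — 4 statements merged into one kernel-verified Lean document; each statement's English description precedes it below -/
import Mathlib

section
/- Pointwise strong q-stability bounds: for every n ≥ 1 and every measurable A ⊆ 𝒳ⁿ with P_X^{⊗n}(A) > 0, setting α := −(1/n) log P_X^{⊗n}(A), one has −(1/n) log ‖P_{X|Y}^{⊗n}(A|·)‖_q ≥ Θ_{q'}(α) for every q ∈ [1,∞); and for every q ∈ (−∞,1) \ {0}, −(1/n) log ‖P_{X|Y}^{⊗n}(A|·)‖_q ≤ φ̂_{q'}(α) if α > 0 and −(1/n) log ‖P_{X|Y}^{⊗n}(A|·)‖_q ≤ 0 if α = 0; here q' := q/(q−1) (with q' := ∞ for q = 1 and the convention t/∞ := 0). -/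
open MeasureTheory ProbabilityTheory Set Filter
open scoped ENNReal NNReal BigOperators Classical Topology

noncomputable section

namespace BL

variable {X : Type*} {Y : Type*} [MeasurableSpace X] [MeasurableSpace Y]

/-! ### Extended logarithm, exponential, and division conventions -/

/-- Extended logarithm `ℝ≥0∞ → EReal`, with `log 0 = ⊥` and `log ⊤ = ⊤`. -/
def elog (x : ℝ≥0∞) : EReal :=
  if x = 0 then ⊥ else if x = ⊤ then ⊤ else ((Real.log x.toReal : ℝ) : EReal)

/-- Extended exponential `EReal → ℝ≥0∞`, with `exp ⊥ = 0` and `exp ⊤ = ⊤`. -/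
def eexp (x : EReal) : ℝ≥0∞ :=
  if x = ⊥ then 0 else if x = ⊤ then ⊤ else ENNReal.ofReal (Real.exp x.toReal)

/-- Division of an extended real by a real, with the conventions `a/0 = +∞` for `a > 0`,
`a/0 = -∞` for `a < 0` and `0/0 = 0`. -/
def ediv (x : EReal) (c : ℝ) : EReal :=
  if c = 0 then (if 0 < x then ⊤ else if x < 0 then ⊥ else 0)
  else x * ((c⁻¹ : ℝ) : EReal)

/-- Division of a real by an extended real, with the convention `t/(±∞) = 0`. -/
def divE (t : ℝ) (r : EReal) : EReal :=
  if r = ⊤ ∨ r = ⊥ then 0 else ((t / r.toReal : ℝ) : EReal)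

/-- Hölder conjugate, as an extended real (`conj 1 = ⊤`). -/
def conj (q : ℝ) : EReal := if q = 1 then ⊤ else ((q / (q - 1) : ℝ) : EReal)

/-! ### Norms with a real (possibly negative) exponent -/

/-- `p`-"norm" of an `ℝ≥0∞`-valued function (`p` a nonzero real). -/
def enorm (P : Measure X) (F : X → ℝ≥0∞) (p : ℝ) : ℝ≥0∞ :=
  (∫⁻ x, F x ^ p ∂P) ^ (1 / p)

/-- `∞`-norm (essential supremum) of an `ℝ≥0∞`-valued function. -/
def enormInf (P : Measure X) (F : X → ℝ≥0∞) : ℝ≥0∞ := essSup F P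

/-- `p`-"norm" of a nonnegative real-valued function. -/
def rnorm (P : Measure X) (f : X → ℝ) (p : ℝ) : ℝ≥0∞ :=
  enorm P (fun x => ENNReal.ofReal (f x)) p

/-- `∞`-norm of a nonnegative real-valued function. -/
def rnormInf (P : Measure X) (f : X → ℝ) : ℝ≥0∞ :=
  enormInf P (fun x => ENNReal.ofReal (f x))

/-! ### Divergences -/

/-- Kullback--Leibler divergence, valued in `EReal` (equal to `⊤` when undefined). -/
def KL (Q P : Measure X) : EReal :=
  if Q ≪ P ∧ Integrable (fun x => Real.log (Q.rnDeriv P x).toReal) Q then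
    ((∫ x, Real.log (Q.rnDeriv P x).toReal ∂Q : ℝ) : EReal)
  else ⊤

/-- Rényi divergence of order `s` (`s = 1` gives the KL divergence). -/
def Renyi (s : ℝ) (Q P : Measure X) : EReal :=
  if s = 1 then KL Q P
  else (((s - 1)⁻¹ : ℝ) : EReal) *
    elog (∫⁻ x, Q.rnDeriv (Q + P) x ^ s * P.rnDeriv (Q + P) x ^ (1 - s) ∂(Q + P))

/-- First marginal of a measure on a product space. -/
def m1 (P : Measure (X × Y)) : Measure X := P.map Prod.fst

/-- Second marginal of a measure on a product space. -/
def m2 (P : Measure (X × Y)) : Measure Y := P.map Prod.snd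

/-- Couplings of a pair of (probability) measures. -/
def couplings (μ : Measure X) (ν : Measure Y) : Set (Measure (X × Y)) :=
  {π | IsProbabilityMeasure π ∧ π.map Prod.fst = μ ∧ π.map Prod.snd = ν}

/-- `𝔻(QX, QY ‖ P)` : minimum relative entropy over couplings. -/
def Dmin (QX : Measure X) (QY : Measure Y) (P : Measure (X × Y)) : EReal :=
  ⨅ (π : Measure (X × Y)) (_ : π ∈ couplings QX QY), KL π P

/-! ### The functions φ and their envelopes -/

/-- `φ̲(s,t)`. -/
def phiL (P : Measure (X × Y)) (s t : ℝ) : EReal :=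
  ⨅ (QX : Measure X) (QY : Measure Y) (_ : IsProbabilityMeasure QX)
    (_ : IsProbabilityMeasure QY) (_ : QX ≪ m1 P) (_ : QY ≪ m2 P)
    (_ : KL QX (m1 P) = (s : EReal)) (_ : KL QY (m2 P) = (t : EReal)),
    Dmin QX QY P

/-- `φ̄(s,t)`. -/
def phiU (P : Measure (X × Y)) (s t : ℝ) : EReal :=
  ⨆ (QX : Measure X) (QY : Measure Y) (_ : IsProbabilityMeasure QX)
    (_ : IsProbabilityMeasure QY) (_ : QX ≪ m1 P) (_ : QY ≪ m2 P)
    (_ : KL QX (m1 P) = (s : EReal)) (_ : KL QY (m2 P) = (t : EReal)),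
    Dmin QX QY P

/-- Lower convex envelope on `[0,∞)²`, via convex combinations of (at most) 4 points
(Carathéodory). -/
def lce2 (F : ℝ → ℝ → EReal) (a b : ℝ) : EReal :=
  ⨅ (q : Fin 4 → ℝ) (x : Fin 4 → ℝ × ℝ) (_ : ∀ i, 0 ≤ q i) (_ : ∑ i, q i = 1)
    (_ : ∀ i, 0 ≤ (x i).1 ∧ 0 ≤ (x i).2)
    (_ : ∑ i, q i * (x i).1 = a) (_ : ∑ i, q i * (x i).2 = b),
    ∑ i, (q i : EReal) * F (x i).1 (x i).2

/-- Upper concave envelope on `[0,∞)²`. -/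
def uce2 (F : ℝ → ℝ → EReal) (a b : ℝ) : EReal :=
  ⨆ (q : Fin 4 → ℝ) (x : Fin 4 → ℝ × ℝ) (_ : ∀ i, 0 ≤ q i) (_ : ∑ i, q i = 1)
    (_ : ∀ i, 0 ≤ (x i).1 ∧ 0 ≤ (x i).2)
    (_ : ∑ i, q i * (x i).1 = a) (_ : ∑ i, q i * (x i).2 = b),
    ∑ i, (q i : EReal) * F (x i).1 (x i).2

/-- Lower convex envelope on `[0,∞)`. -/
def lce1 (F : ℝ → EReal) (a : ℝ) : EReal :=
  ⨅ (q : Fin 3 → ℝ) (x : Fin 3 → ℝ) (_ : ∀ i, 0 ≤ q i) (_ : ∑ i, q i = 1)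
    (_ : ∀ i, 0 ≤ x i) (_ : ∑ i, q i * x i = a),
    ∑ i, (q i : EReal) * F (x i)

/-- Upper concave envelope on `[0,∞)`. -/
def uce1 (F : ℝ → EReal) (a : ℝ) : EReal :=
  ⨆ (q : Fin 3 → ℝ) (x : Fin 3 → ℝ) (_ : ∀ i, 0 ≤ q i) (_ : ∑ i, q i = 1)
    (_ : ∀ i, 0 ≤ x i) (_ : ∑ i, q i * x i = a),
    ∑ i, (q i : EReal) * F (x i)

/-- `Θ̲(α,β)`: increasing lower convex envelope of `φ̲`. -/
def ThetaL (P : Measure (X × Y)) (α β : ℝ) : EReal :=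
  ⨅ (s : ℝ) (t : ℝ) (_ : α ≤ s) (_ : β ≤ t), lce2 (phiL P) s t

/-- `Θ̄(α,β)`: increasing upper concave envelope of `φ̄`. -/
def ThetaU (P : Measure (X × Y)) (α β : ℝ) : EReal :=
  ⨆ (s : ℝ) (t : ℝ) (_ : 0 ≤ s) (_ : s ≤ α) (_ : 0 ≤ t) (_ : t ≤ β), uce2 (phiU P) s t

/-- `φ_r(s) = inf_{t ≥ 0} (φ̲(s,t) - t/r)` for `r ∈ [1,∞]` (`r` an extended real). -/
def phiRinf (P : Measure (X × Y)) (r : EReal) (s : ℝ) : EReal :=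
  ⨅ (t : ℝ) (_ : 0 ≤ t), phiL P s t - divE t r

/-- `Θ_r(α)` for `r ∈ [1,∞]`. -/
def ThetaGe1 (P : Measure (X × Y)) (r : EReal) (α : ℝ) : EReal :=
  ⨅ (s : ℝ) (_ : α ≤ s), lce1 (phiRinf P r) s

/-- `φ_r(s) = sup_{t ≥ 0} (φ̄(s,t) - t/r)` for `r ∈ (0,1)`. -/
def phiSupR (P : Measure (X × Y)) (r : ℝ) (s : ℝ) : EReal :=
  ⨆ (t : ℝ) (_ : 0 ≤ t), phiU P s t - divE t (r : EReal)

/-- `φ_r(s)` for `r < 0`. -/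
def phiNeg (P : Measure (X × Y)) (r : ℝ) (s : ℝ) : EReal :=
  ⨆ (QX : Measure X) (_ : IsProbabilityMeasure QX) (_ : QX ≪ m1 P)
    (_ : KL QX (m1 P) = (s : EReal)),
    ⨅ (QY : Measure Y) (_ : IsProbabilityMeasure QY) (_ : QY ≪ m2 P),
      Dmin QX QY P - ediv (KL QY (m2 P)) r

/-- `φ_r(s)` for `r < 1`, `r ≠ 0`. -/
def phiLT1 (P : Measure (X × Y)) (r : ℝ) (s : ℝ) : EReal :=
  if 0 < r then phiSupR P r s else phiNeg P r s

/-- `Θ_r(α)` for `r < 1`, `r ≠ 0`. -/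
def ThetaLT1 (P : Measure (X × Y)) (r : ℝ) (α : ℝ) : EReal :=
  ⨆ (s : ℝ) (_ : 0 ≤ s) (_ : s ≤ α), uce1 (phiLT1 P r) s

/-- `α_max = sup {-log μ(A) : μ(A) > 0}`. -/
def alphaMax (μ : Measure X) : EReal :=
  ⨆ (A : Set X) (_ : MeasurableSet A) (_ : μ A ≠ 0), -elog (μ A)

/-! ### Entropies -/

/-- `Ent_{p,p}(f)`. -/
def entPP (P : Measure X) (f : X → ℝ) (p : ℝ) : EReal :=
  (((∫ x, f x ^ p * Real.log (f x ^ p) ∂P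
      - (∫ x, f x ^ p ∂P) * Real.log (∫ x, f x ^ p ∂P))
     / (∫ x, f x ^ p ∂P) : ℝ) : EReal)

/-- `Ent_{p,p̂}(f)` for a nonzero real `p` and a real `p̂`. -/
def ent (P : Measure X) (f : X → ℝ) (p phat : ℝ) : EReal :=
  if phat = p then entPP P f p
  else if phat = 0 then -elog (P {x | 0 < f x})
  else ((p * phat / (p - phat) : ℝ) : EReal) * (elog (rnorm P f p) - elog (rnorm P f phat))

/-- `Ent_{p,∞}(f)` for a nonzero real `p`. -/
def entTop (P : Measure X) (f : X → ℝ) (p : ℝ) : EReal :=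
  if rnormInf P f = ⊤ then (if 0 < p then ⊤ else ⊥)
  else ((-p : ℝ) : EReal) * (elog (rnorm P f p) - elog (rnormInf P f))

/-- `Ent_{p,p*}(f)` for a nonzero real `p` and `p* ∈ [0,∞]`. -/
def entE (P : Measure X) (f : X → ℝ) (p : ℝ) (ps : ℝ≥0∞) : EReal :=
  if ps = ⊤ then entTop P f p else ent P f p ps.toReal

/-- Admissible functions: measurable, nonnegative, not a.e. zero. -/
def Adm (P : Measure X) (f : X → ℝ) : Prop :=
  Measurable f ∧ (∀ x, 0 ≤ f x) ∧ ¬ f =ᵐ[P] (fun _ => 0)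

/-! ### Products -/

/-- `n`-fold product measure. -/
def piM (n : ℕ) (P : Measure X) : Measure (Fin n → X) := Measure.pi fun _ => P

def fstv {n : ℕ} (z : Fin n → X × Y) : Fin n → X := fun i => (z i).1
def sndv {n : ℕ} (z : Fin n → X × Y) : Fin n → Y := fun i => (z i).2

/-- `⟨f,g⟩ = ∫ f(xⁿ) g(yⁿ) dP^{⊗n}`. -/
def innerFG (P : Measure (X × Y)) (n : ℕ) (f : (Fin n → X) → ℝ) (g : (Fin n → Y) → ℝ) :
    ℝ≥0∞ :=
  ∫⁻ z, ENNReal.ofReal (f (fstv z)) * ENNReal.ofReal (g (sndv z)) ∂(piM n P)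

/-- The set `A × B` viewed inside `(X × Y)ⁿ`. -/
def prodSet {n : ℕ} (A : Set (Fin n → X)) (B : Set (Fin n → Y)) : Set (Fin n → X × Y) :=
  {z | fstv z ∈ A ∧ sndv z ∈ B}

/-! ### Kernels -/

/-- Product of kernel measures `⊗ᵢ κ(yᵢ)`. -/
def kpi {n : ℕ} (κ : Kernel Y X) (y : Fin n → Y) : Measure (Fin n → X) :=
  Measure.pi fun i => κ (y i)

/-- The conditional expectation operator `P_{X|Y}^{⊗n}(f)`. -/
def condOp {n : ℕ} (κ : Kernel Y X) (f : (Fin n → X) → ℝ) : (Fin n → Y) → ℝ≥0∞ :=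
  fun y => ∫⁻ x, ENNReal.ofReal (f x) ∂(kpi κ y)

/-- `κ` is a regular conditional probability of the first coordinate given the second. -/
def IsCondKernel (P : Measure (X × Y)) (κ : Kernel Y X) : Prop :=
  ∀ (A : Set X) (B : Set Y), MeasurableSet A → MeasurableSet B →
    P (A ×ˢ B) = ∫⁻ y in B, κ y A ∂(m2 P)

/-! ### η and `Λ̲*` -/

/-- The function `η_{p,p̂}(α,s)`. -/
def eta (p phat α : ℝ) (s : EReal) : EReal :=
  if 0 ≤ p ∧ 0 ≤ phat then max (ediv ((α : EReal) - s) p) (ediv ((α : EReal) - s) phat)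
  else if 0 < p ∧ phat < 0 then ediv ((α : EReal) - s) p
  else if 0 < phat ∧ p < 0 then ediv ((α : EReal) - s) phat
  else ⊥

/-- `Λ̲*_{p,q,p̂,q̂}(α,β)` (time sharing variable of size ≤ 4). -/
def LamLstar (P : Measure (X × Y)) (p q phat qhat α β : ℝ) : EReal :=
  ⨅ (w : Fin 4 → ℝ) (QX : Fin 4 → Measure X) (QY : Fin 4 → Measure Y)
    (_ : ∀ i, 0 ≤ w i) (_ : ∑ i, w i = 1)
    (_ : ∀ i, IsProbabilityMeasure (QX i)) (_ : ∀ i, QX i ≪ m1 P)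
    (_ : ∀ i, IsProbabilityMeasure (QY i)) (_ : ∀ i, QY i ≪ m2 P),
    (∑ i, (w i : EReal) * Dmin (QX i) (QY i) P)
      + eta p phat α (∑ i, (w i : EReal) * KL (QX i) (m1 P))
      + eta q qhat β (∑ i, (w i : EReal) * KL (QY i) (m2 P))

/-! ### Sub/supergradients (slopes in `[0,∞]`) -/

def IsSubgrad2 (F : ℝ → ℝ → EReal) (α β : ℝ) (u v : ℝ≥0∞) : Prop :=
  ∀ s t : ℝ, 0 ≤ s → 0 ≤ t →
    F α β + (u : EReal) * ((s - α : ℝ) : EReal) + (v : EReal) * ((t - β : ℝ) : EReal) ≤ F s t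

def IsSupergrad2 (F : ℝ → ℝ → EReal) (α β : ℝ) (u v : ℝ≥0∞) : Prop :=
  ∀ s t : ℝ, 0 ≤ s → 0 ≤ t →
    F s t ≤ F α β + (u : EReal) * ((s - α : ℝ) : EReal) + (v : EReal) * ((t - β : ℝ) : EReal)

def IsSubgrad1 (F : ℝ → EReal) (α : ℝ) (u : ℝ≥0∞) : Prop :=
  ∀ s : ℝ, 0 ≤ s → F α + (u : EReal) * ((s - α : ℝ) : EReal) ≤ F s

def IsSupergrad1 (F : ℝ → EReal) (α : ℝ) (u : ℝ≥0∞) : Prop :=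
  ∀ s : ℝ, 0 ≤ s → F s ≤ F α + (u : EReal) * ((s - α : ℝ) : EReal)


lemma carath {K : Set (ℝ × ℝ)} {x : ℝ × ℝ} (hx : x ∈ convexHull ℝ K) :
    ∃ (q : Fin 3 → ℝ) (z : Fin 3 → ℝ × ℝ), (∀ i, 0 ≤ q i) ∧ ∑ i, q i = 1 ∧ (∀ i, z i ∈ K) ∧
      ∑ i, q i • z i = x := by
  obtain ⟨ι, hι, z, w, hz, haff, hw, hw1, hwz⟩ := eq_pos_convex_span_of_mem_convexHull hx
  have hne : Nonempty ι := by
    by_contra h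
    rw [not_nonempty_iff] at h
    simp at hw1
  obtain ⟨i0⟩ := hne
  have hcard : Fintype.card ι ≤ Fintype.card (Fin 3) := by
    have h1 := haff.card_le_finrank_succ
    have h2 := Submodule.finrank_le (vectorSpan ℝ (Set.range z))
    have h3 : Module.finrank ℝ (ℝ × ℝ) = 2 := by simp
    simp only [Fintype.card_fin]
    omega
  obtain ⟨e⟩ := Function.Embedding.nonempty_of_card_le hcard
  have he := e.injective
  refine ⟨Function.extend e w 0, Function.extend e z (fun _ => z i0), ?_, ?_, ?_, ?_⟩
  · intro j
    by_cases h : ∃ i, e i = j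
    · obtain ⟨i, rfl⟩ := h
      rw [he.extend_apply]; exact (hw i).le
    · rw [Function.extend_apply' _ _ _ h]; simp
  · rw [← hw1]; symm
    apply Fintype.sum_of_injective e he
    · intro j hj
      rw [Function.extend_apply' _ _ _ (by simpa using hj)]; rfl
    · intro i; rw [he.extend_apply]
  · intro j
    by_cases h : ∃ i, e i = j
    · obtain ⟨i, rfl⟩ := h
      rw [he.extend_apply]; exact hz ⟨i, rfl⟩
    · rw [Function.extend_apply' _ _ _ h]; exact hz ⟨i0, rfl⟩
  · rw [← hwz]; symm
    apply Fintype.sum_of_injective e he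
    · intro j hj
      rw [Function.extend_apply' _ _ _ (by simpa using hj)]; simp
    · intro i; rw [he.extend_apply, he.extend_apply]

/-- hypograph -/
def hyp (F : ℝ → EReal) : Set (ℝ × ℝ) := {z | 0 ≤ z.1 ∧ (z.2 : EReal) ≤ F z.1}
/-- epigraph -/
def epi (F : ℝ → EReal) : Set (ℝ × ℝ) := {z | 0 ≤ z.1 ∧ F z.1 ≤ (z.2 : EReal)}

def CU (F : ℝ → EReal) : Set (ℝ × ℝ) := {z | ∀ ε > 0, (z.1, z.2 - ε) ∈ convexHull ℝ (hyp F)}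
/-- reflected in the second coordinate -/
def CL (F : ℝ → EReal) : Set (ℝ × ℝ) :=
  {z | ∀ ε > 0, ∃ s ≥ z.1, (s, -z.2 + ε) ∈ convexHull ℝ (epi F)}

lemma hyp_le {F : ℝ → EReal} {a v : ℝ} (h : (a, v) ∈ convexHull ℝ (hyp F)) :
    (v : EReal) ≤ uce1 F a := by
  obtain ⟨q, z, hq, hq1, hz, hs⟩ := carath h
  have h1 : ∑ i, q i * (z i).1 = a := by
    have := congrArg Prod.fst hs; simpa [Prod.fst_sum] using this
  have h2 : ∑ i, q i * (z i).2 = v := by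
    have := congrArg Prod.snd hs; simpa [Prod.snd_sum] using this
  have h3 : (v : EReal) ≤ ∑ i, (q i : EReal) * F (z i).1 := by
    rw [← h2]
    have : ((∑ i, q i * (z i).2 : ℝ) : EReal) = ∑ i, (q i : EReal) * ((z i).2 : EReal) := by
      simp only [Fin.sum_univ_three]; push_cast; rfl
    rw [this]
    refine Finset.sum_le_sum fun i _ => ?_
    exact mul_le_mul_of_nonneg_left (hz i).2 (by exact_mod_cast hq i)
  refine h3.trans ?_
  unfold uce1
  exact le_iSup_of_le q <| le_iSup_of_le (fun i => (z i).1) <| le_iSup_of_le hq <|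
    le_iSup_of_le hq1 <| le_iSup_of_le (fun i => (hz i).1) <| le_iSup_of_le h1 le_rfl

lemma epi_le {F : ℝ → EReal} {a v : ℝ} (h : (a, v) ∈ convexHull ℝ (epi F)) :
    lce1 F a ≤ (v : EReal) := by
  obtain ⟨q, z, hq, hq1, hz, hs⟩ := carath h
  have h1 : ∑ i, q i * (z i).1 = a := by
    have := congrArg Prod.fst hs; simpa [Prod.fst_sum] using this
  have h2 : ∑ i, q i * (z i).2 = v := by
    have := congrArg Prod.snd hs; simpa [Prod.snd_sum] using this
  have h3 : ∑ i, (q i : EReal) * F (z i).1 ≤ (v : EReal) := by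
    rw [← h2]
    have : ((∑ i, q i * (z i).2 : ℝ) : EReal) = ∑ i, (q i : EReal) * ((z i).2 : EReal) := by
      simp only [Fin.sum_univ_three]; push_cast; rfl
    rw [this]
    refine Finset.sum_le_sum fun i _ => ?_
    exact mul_le_mul_of_nonneg_left (hz i).2 (by exact_mod_cast hq i)
  refine le_trans ?_ h3
  unfold lce1
  exact iInf_le_of_le q <| iInf_le_of_le (fun i => (z i).1) <| iInf_le_of_le hq <|
    iInf_le_of_le hq1 <| iInf_le_of_le (fun i => (hz i).1) <| iInf_le_of_le h1 le_rfl

/-- Abstract property of our two sets. -/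
structure Good (C : Set (ℝ × ℝ)) : Prop where
  conv : Convex ℝ C
  down : ∀ a v w, (a, v) ∈ C → w ≤ v → (a, w) ∈ C
  closed : ∀ a v, (∀ ε > 0, (a, v - ε) ∈ C) → (a, v) ∈ C

lemma hull_down {F : ℝ → EReal} {a v w : ℝ} (h : (a, v) ∈ convexHull ℝ (hyp F)) (hw : w ≤ v) :
    (a, w) ∈ convexHull ℝ (hyp F) := by
  have : convexHull ℝ (hyp F) ⊆ {z | (z.1, z.2 - (v - w)) ∈ convexHull ℝ (hyp F)} := by
    refine convexHull_min ?_ ?_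
    · rintro ⟨x, y⟩ ⟨h1, h2⟩
      apply subset_convexHull
      refine ⟨h1, le_trans ?_ h2⟩
      simp only [EReal.coe_le_coe_iff]; linarith
    · intro x hx y hy s t hs ht hst
      have := (convex_convexHull ℝ (hyp F)) hx hy hs ht hst
      simp only [Set.mem_ofPred_eq] at this ⊢
      convert this using 1
      ext
      · simp
      · simp; linear_combination (v - w) * hst
  have h2 := this h
  simpa using h2

lemma hull_up {F : ℝ → EReal} {a v w : ℝ} (h : (a, v) ∈ convexHull ℝ (epi F)) (hw : v ≤ w) :
    (a, w) ∈ convexHull ℝ (epi F) := by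
  have : convexHull ℝ (epi F) ⊆ {z | (z.1, z.2 - (v - w)) ∈ convexHull ℝ (epi F)} := by
    refine convexHull_min ?_ ?_
    · rintro ⟨x, y⟩ ⟨h1, h2⟩
      apply subset_convexHull
      refine ⟨h1, le_trans h2 ?_⟩
      simp only [EReal.coe_le_coe_iff]; linarith
    · intro x hx y hy s t hs ht hst
      have := (convex_convexHull ℝ (epi F)) hx hy hs ht hst
      simp only [Set.mem_ofPred_eq] at this ⊢
      convert this using 1
      ext
      · simp
      · simp; linear_combination (v - w) * hst
  have h2 := this h
  simpa using h2

lemma good_CU (F : ℝ → EReal) : Good (CU F) where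
  conv := by
    intro x hx y hy s t hs ht hst ε hε
    have := (convex_convexHull ℝ (hyp F)) (hx ε hε) (hy ε hε) hs ht hst
    convert this using 1
    ext
    · simp
    · simp; linear_combination ε * hst
  down := fun a v w h hw ε hε => hull_down (h ε hε) (by simpa using hw)
  closed := by
    intro a v h ε hε
    have := h (ε/2) (by positivity) (ε/2) (by positivity)
    convert this using 2
    simp; ring

lemma good_CL (F : ℝ → EReal) : Good (CL F) where
  conv := by
    intro x hx y hy s t hs ht hst ε hε
    obtain ⟨a, ha, ha'⟩ := hx ε hε
    obtain ⟨b, hb, hb'⟩ := hy ε hε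
    have := (convex_convexHull ℝ (epi F)) ha' hb' hs ht hst
    refine ⟨s * a + t * b, ?_, ?_⟩
    · simp only [Prod.fst_add, Prod.smul_fst, smul_eq_mul]
      have := mul_le_mul_of_nonneg_left ha hs
      have := mul_le_mul_of_nonneg_left hb ht
      linarith
    convert this using 1
    ext
    · simp
    · simp; linear_combination -ε * hst
  down := by
    intro a v w h hw ε hε
    obtain ⟨b, hb, hb'⟩ := h ε hε
    exact ⟨b, hb, hull_up hb' (by dsimp only; linarith)⟩
  closed := by
    intro a v h ε hε
    obtain ⟨b, hb, hb'⟩ := h (ε/2) (by positivity) (ε/2) (by positivity)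
    refine ⟨b, hb, ?_⟩
    convert hb' using 2
    simp; ring

lemma CL_left {F : ℝ → EReal} {a b v : ℝ} (h : (a, v) ∈ CL F) (hb : b ≤ a) : (b, v) ∈ CL F := by
  intro ε hε
  obtain ⟨s, hs, hs'⟩ := h ε hε
  exact ⟨s, le_trans hb hs, hs'⟩

lemma jensen_lt {C : Set (ℝ × ℝ)} (hC : Good C) {Ω : Type*} [MeasurableSpace Ω] (μ : Measure Ω)
    [IsProbabilityMeasure μ] {a h : Ω → ℝ} (ha : Integrable a μ) (hh : Integrable h μ)
    (hmem : ∀ᵐ ω ∂μ, (a ω, h ω) ∈ C) : (∫ ω, a ω ∂μ, ∫ ω, h ω ∂μ) ∈ C := by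
  apply hC.closed
  intro ε hε
  by_contra hcon
  set m := ∫ ω, a ω ∂μ with hm
  set M := ∫ ω, h ω ∂μ - ε with hM
  have hlt : ∀ v, (m, v) ∈ C → v < M := by
    intro v hv
    by_contra hle
    exact hcon (hC.down _ _ _ hv (not_lt.1 hle))
  have key : ∀ a1 v1 a2 v2, (a1, v1) ∈ C → (a2, v2) ∈ C → a1 < m → m < a2 →
      (v2 - M) / (a2 - m) ≤ (M - v1) / (m - a1) := by
    intro a1 v1 a2 v2 h1 h2 l1 l2
    have d : 0 < a2 - a1 := by linarith
    have := hC.conv h1 h2 (a := (a2 - m) / (a2 - a1)) (b := (m - a1) / (a2 - a1))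
      (by apply div_nonneg <;> linarith) (by apply div_nonneg <;> linarith)
      (by field_simp; ring)
    have e : ((a2 - m) / (a2 - a1)) • (a1, v1) + ((m - a1) / (a2 - a1)) • (a2, v2)
        = (m, ((a2 - m) * v1 + (m - a1) * v2) / (a2 - a1)) := by
      ext
      · simp; field_simp; ring
      · simp; field_simp
    rw [e] at this
    have := hlt _ this
    rw [div_lt_iff₀ d] at this
    rw [div_le_div_iff₀ (by linarith) (by linarith)]
    nlinarith
  have hInt0 : ∀ k : ℝ, (∀ᵐ ω ∂μ, h ω ≤ M + k * (a ω - m)) → False := by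
    intro k hk
    have h1 : ∫ ω, h ω ∂μ ≤ ∫ ω, (M + k * (a ω - m)) ∂μ :=
      integral_mono_ae hh ((integrable_const _).add ((ha.sub (integrable_const _)).const_mul _)) hk
    have h2 : ∫ ω, (M + k * (a ω - m)) ∂μ = M := by
      have e1 : Integrable (fun ω => a ω - m) μ := ha.sub (integrable_const _)
      have e2 : Integrable (fun ω => k * (a ω - m)) μ := e1.const_mul _
      rw [integral_add (integrable_const _) e2,
        integral_const_mul, integral_sub ha (integrable_const _)]
      simp [← hm]
    rw [h2] at h1
    linarith
  have hconst : (∀ᵐ ω ∂μ, a ω = m) → False := by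
    intro hae
    apply hInt0 0
    filter_upwards [hae, hmem] with ω h1 h2
    rw [h1] at h2
    have := hlt _ h2
    linarith
  by_cases hR : ∃ z ∈ C, m < z.1
  swap
  · push Not at hR
    apply hconst
    have hle : a ≤ᵐ[μ] fun _ => m := by
      filter_upwards [hmem] with ω h2 using hR _ h2
    have := (integral_eq_iff_of_ae_le ha (integrable_const _) hle).1 (by simp [hm])
    exact this
  by_cases hL : ∃ z ∈ C, z.1 < m
  swap
  · push Not at hL
    apply hconst
    have hle : (fun _ => m) ≤ᵐ[μ] a := by
      filter_upwards [hmem] with ω h2 using hL _ h2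
    have := (integral_eq_iff_of_ae_le (integrable_const _) ha hle).1 (by simp [hm])
    filter_upwards [this] with ω h using h.symm
  obtain ⟨zR, hzR, hR⟩ := hR
  obtain ⟨zL, hzL, hL⟩ := hL
  let S := {k | ∃ z ∈ C, m < z.1 ∧ k = (z.2 - M) / (z.1 - m)}
  have hS : S.Nonempty := ⟨_, zR, hzR, hR, rfl⟩
  have hbdd : BddAbove S := by
    refine ⟨(M - zL.2) / (m - zL.1), ?_⟩
    rintro k ⟨z, hz, hz', rfl⟩
    exact key _ _ _ _ hzL hz hL hz'
  apply hInt0 (sSup S)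
  filter_upwards [hmem] with ω hω
  rcases lt_trichotomy (a ω) m with hlt' | heq | hgt
  · have : sSup S ≤ (M - h ω) / (m - a ω) := by
      apply csSup_le hS
      rintro k ⟨z, hz, hz', rfl⟩
      exact key _ _ _ _ hω hz hlt' hz'
    rw [le_div_iff₀ (by linarith)] at this
    linarith
  · rw [heq] at hω ⊢
    have := hlt _ hω
    linarith
  · have : (h ω - M) / (a ω - m) ≤ sSup S := le_csSup hbdd ⟨_, hω, hgt, rfl⟩
    rw [div_le_iff₀ (by linarith)] at this
    linarith

/-- `n`-fold scaling of `C`. -/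
def Tn (C : Set (ℝ × ℝ)) (n : ℕ) : Set (ℝ × ℝ) :=
  {z | (n = 0 ∧ z.1 = 0 ∧ z.2 ≤ 0) ∨ (n ≠ 0 ∧ (z.1 / n, z.2 / n) ∈ C)}

lemma good_Tn {C : Set (ℝ × ℝ)} (hC : Good C) (n : ℕ) : Good (Tn C n) := by
  rcases Nat.eq_zero_or_pos n with rfl | hn
  · refine ⟨?_, ?_, ?_⟩
    · rintro x hx y hy s t hs ht hst
      simp only [Tn, ne_eq, not_true_eq_false, false_and, or_false, true_and, Set.mem_ofPred_eq] at *
      refine ⟨by simp [hx.1, hy.1], ?_⟩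
      simp only [Prod.snd_add, Prod.smul_snd, smul_eq_mul]
      have := mul_nonpos_of_nonneg_of_nonpos hs hx.2
      have := mul_nonpos_of_nonneg_of_nonpos ht hy.2
      linarith
    · intro a v w h hw
      simp only [Tn, ne_eq, not_true_eq_false, false_and, or_false, true_and, Set.mem_ofPred_eq] at *
      exact ⟨h.1, by linarith⟩
    · intro a v h
      simp only [Tn, ne_eq, not_true_eq_false, false_and, or_false, true_and, Set.mem_ofPred_eq] at *
      refine ⟨(h 1 one_pos).1, ?_⟩
      apply le_of_forall_pos_le_add
      intro ε hε
      have := (h ε hε).2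
      linarith
  · have hn' : n ≠ 0 := by omega
    have hnR : (0 : ℝ) < n := by exact_mod_cast hn
    refine ⟨?_, ?_, ?_⟩
    · rintro x hx y hy s t hs ht hst
      simp only [Tn, hn', false_and, false_or, ne_eq, not_false_eq_true, true_and,
        Set.mem_ofPred_eq] at *
      have := hC.conv hx hy hs ht hst
      convert this using 1
      ext
      · simp; field_simp
      · simp; field_simp
    · intro a v w h hw
      simp only [Tn, hn', false_and, false_or, ne_eq, not_false_eq_true, true_and,
        Set.mem_ofPred_eq] at *
      exact hC.down _ _ _ h (by gcongr)
    · intro a v h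
      simp only [Tn, hn', false_and, false_or, ne_eq, not_false_eq_true, true_and,
        Set.mem_ofPred_eq] at *
      apply hC.closed
      intro ε hε
      have := h (n * ε) (by positivity)
      convert this using 2
      field_simp

lemma Tn_add {C : Set (ℝ × ℝ)} (hC : Good C) {n : ℕ} {a v s w : ℝ} (h : (a, v) ∈ Tn C n)
    (h' : (s, w) ∈ C) : (s + a, w + v) ∈ Tn C (n + 1) := by
  rcases Nat.eq_zero_or_pos n with rfl | hn
  · simp only [Tn, ne_eq, not_true_eq_false, false_and, or_false, true_and, Set.mem_ofPred_eq] at h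
    right
    refine ⟨by simp, ?_⟩
    simp only [h.1]
    simp only [add_zero, zero_add, Nat.cast_one, div_one]
    exact hC.down _ _ _ h' (by linarith)
  · have hn' : n ≠ 0 := by omega
    have hnR : (0 : ℝ) < n := by exact_mod_cast hn
    simp only [Tn, hn', false_and, false_or, ne_eq, not_false_eq_true, true_and,
        Set.mem_ofPred_eq] at h
    right
    refine ⟨by simp, ?_⟩
    have := hC.conv h h' (a := n / (n + 1)) (b := 1 / (n+1)) (by positivity) (by positivity)
      (by field_simp)
    convert this using 1
    ext
    · simp; field_simp; ring
    · simp; field_simp; ring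

lemma CU_le {F : ℝ → EReal} {a v : ℝ} (h : (a, v) ∈ CU F) : (v : EReal) ≤ uce1 F a := by
  apply EReal.ge_of_forall_gt_iff_ge.1
  intro z hz
  have hz' : z < v := by exact_mod_cast hz
  have := hyp_le (h (v - z) (by linarith))
  simpa using this

lemma CL_le {X Y : Type*} [MeasurableSpace X] [MeasurableSpace Y] {P : Measure (X × Y)} {r : EReal}
    {a v : ℝ} (h : (a, -v) ∈ CL (phiRinf P r)) : ThetaGe1 P r a ≤ v := by
  apply EReal.le_of_forall_lt_iff_le.1
  intro z hz
  have hz' : v < z := by exact_mod_cast hz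
  obtain ⟨s, hs, hs'⟩ := h (z - v) (by linarith)
  have := epi_le hs'
  unfold ThetaGe1
  refine iInf_le_of_le s <| iInf_le_of_le hs ?_
  simpa using this

lemma CL_Tn_left {F : ℝ → EReal} {a b v : ℝ} {n : ℕ} (h : (a, v) ∈ Tn (CL F) (n + 1)) (hb : b ≤ a) :
    (b, v) ∈ Tn (CL F) (n + 1) := by
  rcases h with h | h
  · simp at h
  · right
    refine ⟨h.1, CL_left h.2 ?_⟩
    gcongr


lemma KL_coe {Q P : Measure X} {d : ℝ} (h : KL Q P = d) :
    Q ≪ P ∧ Integrable (fun x => Real.log (Q.rnDeriv P x).toReal) Q ∧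
      d = ∫ x, Real.log (Q.rnDeriv P x).toReal ∂Q := by
  unfold KL at h
  split_ifs at h with h1
  · exact ⟨h1.1, h1.2, by exact_mod_cast h.symm⟩
  · exact absurd h (by simp)

lemma KL_cases (Q P : Measure X) : KL Q P = ⊤ ∨ ∃ d : ℝ, KL Q P = d := by
  unfold KL
  split_ifs with h1
  · exact Or.inr ⟨_, rfl⟩
  · exact Or.inl rfl

lemma dv {Q P : Measure X} [IsProbabilityMeasure Q] [IsProbabilityMeasure P] {d : ℝ}
    (hKL : KL Q P = d) {f : X → ℝ} (hf : Measurable f) (hpos : ∀ᵐ x ∂Q, 0 < f x)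
    (hInt0 : Integrable (fun x => Real.log (f x)) Q) {c : ℝ} (hc : 0 < c)
    (h : ∫⁻ x, ENNReal.ofReal (f x) ∂P ≤ ENNReal.ofReal c) :
    ∫ x, Real.log (f x) ∂Q ≤ d + Real.log c := by
  obtain ⟨hac, hll, rfl⟩ := KL_coe hKL
  set ρ := fun x => (Q.rnDeriv P x).toReal with hρ
  have hρm : Measurable ρ := (Measure.measurable_rnDeriv Q P).ennreal_toReal
  have hρpos : ∀ᵐ x ∂Q, 0 < ρ x := by
    have h1 := Measure.rnDeriv_pos hac
    have h2 := hac.ae_le (Measure.rnDeriv_lt_top Q P)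
    filter_upwards [h1, h2] with x hx hx'
    exact ENNReal.toReal_pos hx.ne' hx'.ne
  let u := fun x => f x / (ρ x * c)
  have hum : Measurable u := hf.div (hρm.mul_const c)
  have hupos : ∀ᵐ x ∂Q, 0 < u x := by
    filter_upwards [hρpos, hpos] with x h1 h2
    exact div_pos h2 (mul_pos h1 hc)
  have hlu : ∫⁻ x, ENNReal.ofReal (u x) ∂Q ≤ 1 := by
    calc ∫⁻ x, ENNReal.ofReal (u x) ∂Q
        = ∫⁻ x, ENNReal.ofReal (u x) ∂(P.withDensity (Q.rnDeriv P)) := by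
          rw [Measure.withDensity_rnDeriv_eq Q P hac]
      _ = ∫⁻ x, Q.rnDeriv P x * ENNReal.ofReal (u x) ∂P := by
          rw [lintegral_withDensity_eq_lintegral_mul _ (Measure.measurable_rnDeriv Q P)
            hum.ennreal_ofReal]; rfl
      _ ≤ ∫⁻ x, ENNReal.ofReal (f x) * ENNReal.ofReal (c⁻¹) ∂P := by
          apply lintegral_mono_ae
          filter_upwards [Measure.rnDeriv_lt_top Q P] with x hx
          rw [← ENNReal.ofReal_toReal hx.ne]
          change ENNReal.ofReal (ρ x) * _ ≤ _
          have hρ0 : 0 ≤ ρ x := ENNReal.toReal_nonneg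
          rcases hρ0.eq_or_lt with h0 | h0
          · rw [← h0]; simp
          · rw [← ENNReal.ofReal_mul h0.le, ← ENNReal.ofReal_mul' (by positivity)]
            apply ENNReal.ofReal_le_ofReal
            apply le_of_eq
            simp only [u]; field_simp
      _ = (∫⁻ x, ENNReal.ofReal (f x) ∂P) * ENNReal.ofReal (c⁻¹) := by
          rw [lintegral_mul_const _ hf.ennreal_ofReal]
      _ ≤ ENNReal.ofReal c * ENNReal.ofReal (c⁻¹) := by gcongr
      _ = 1 := by rw [← ENNReal.ofReal_mul hc.le, mul_inv_cancel₀ hc.ne']; simp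
  have hui : Integrable u Q := by
    refine ⟨hum.aestronglyMeasurable, ?_⟩
    rw [hasFiniteIntegral_iff_ofReal (hupos.mono fun x hx => hx.le)]
    exact hlu.trans_lt (by simp)
  have hu1 : ∫ x, u x ∂Q ≤ 1 := by
    rw [integral_eq_lintegral_of_nonneg_ae (hupos.mono fun x hx => hx.le) hum.aestronglyMeasurable]
    exact ENNReal.toReal_le_of_le_ofReal zero_le_one (by simpa using hlu)
  have hle : ∫ x, Real.log (f x) ∂Q ≤
      ∫ x, (Real.log (ρ x) + (Real.log c + (u x - 1))) ∂Q := by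
    apply integral_mono_ae hInt0
    · exact hll.add ((integrable_const _).add (hui.sub (integrable_const _)))
    · filter_upwards [hupos, hρpos, hpos] with x h1 h2 h3
      have := Real.log_le_sub_one_of_pos h1
      have e : Real.log (u x) = Real.log (f x) - (Real.log (ρ x) + Real.log c) := by
        simp only [u]
        rw [Real.log_div h3.ne' (mul_pos h2 hc).ne', Real.log_mul h2.ne' hc.ne']
      linarith
  have e1 : Integrable (fun x => u x - 1) Q := hui.sub (integrable_const _)
  have e2 : Integrable (fun x => Real.log c + (u x - 1)) Q := (integrable_const _).add e1
  rw [integral_add hll e2, integral_add (integrable_const _) e1,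
    integral_sub hui (integrable_const _)] at hle
  simp at hle
  linarith

lemma KL_real_nonneg {Q P : Measure X} [IsProbabilityMeasure Q] [IsProbabilityMeasure P] {d : ℝ}
    (hKL : KL Q P = d) : 0 ≤ d := by
  have := dv hKL (f := fun _ => 1) measurable_const (by simp) (by simp) one_pos (by simp)
  simpa using this

lemma KL_nonneg {Q P : Measure X} [IsProbabilityMeasure Q] [IsProbabilityMeasure P] :
    0 ≤ KL Q P := by
  rcases KL_cases Q P with h | ⟨d, h⟩
  · rw [h]; simp
  · rw [h]; exact_mod_cast KL_real_nonneg h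

lemma xlogx_bound {x C : ℝ} (h0 : 0 ≤ x) (hC : x ≤ C) : |x * Real.log x| ≤ 1 + C ^ 2 := by
  rcases le_total x 1 with h | h
  · rcases h0.eq_or_lt with rfl | h0
    · simp; positivity
    · have := Real.abs_log_mul_self_lt x h0 h
      rw [mul_comm]; nlinarith [sq_nonneg C]
  · have h1 := Real.log_nonneg h
    have h2 := Real.log_le_sub_one_of_pos (lt_of_lt_of_le one_pos h)
    rw [abs_of_nonneg (by positivity)]
    nlinarith

lemma KL_density {P : Measure X} [IsProbabilityMeasure P] {f : X → ℝ} (hf : Measurable f)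
    (hf0 : ∀ x, 0 ≤ f x) {C : ℝ} (hC : ∀ᵐ x ∂P, f x ≤ C)
    (h1 : ∫⁻ x, ENNReal.ofReal (f x) ∂P = 1) {Q : Measure X}
    (hQ : Q = P.withDensity (fun x => ENNReal.ofReal (f x))) :
    IsProbabilityMeasure Q ∧ Q ≪ P ∧ Integrable (fun x => Real.log (f x)) Q ∧
      (∀ᵐ x ∂Q, 0 < f x) ∧ KL Q P = ((∫ x, Real.log (f x) ∂Q : ℝ) : EReal) := by
  have hprob : IsProbabilityMeasure Q := by
    refine ⟨?_⟩
    rw [hQ, withDensity_apply _ MeasurableSet.univ]; simpa using h1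
  have hac : Q ≪ P := by rw [hQ]; exact withDensity_absolutelyContinuous _ _
  have hInt0 : Integrable (fun x => Real.log (f x)) Q := by
    rw [hQ, integrable_withDensity_iff_integrable_smul' hf.ennreal_ofReal (by simp)]
    refine Integrable.of_bound (C := 1 + C ^ 2) ?_ ?_
    · exact (hf.ennreal_ofReal.ennreal_toReal.smul hf.log).aestronglyMeasurable
    · filter_upwards [hC] with x hx
      rw [ENNReal.toReal_ofReal (hf0 x), smul_eq_mul, Real.norm_eq_abs]
      exact xlogx_bound (hf0 x) hx
  have hpos : ∀ᵐ x ∂Q, 0 < f x := by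
    rw [hQ, ae_withDensity_iff hf.ennreal_ofReal]
    refine Eventually.of_forall fun x hx => ?_
    simpa using hx
  have hrn : ∀ᵐ x ∂Q, Real.log (Q.rnDeriv P x).toReal = Real.log (f x) := by
    apply hac.ae_le
    rw [hQ]
    filter_upwards [Measure.rnDeriv_withDensity P hf.ennreal_ofReal] with x hx
    rw [hx, ENNReal.toReal_ofReal (hf0 x)]
  refine ⟨hprob, hac, hInt0, hpos, ?_⟩
  unfold KL
  rw [if_pos ⟨hac, hInt0.congr (hrn.mono fun x hx => hx.symm)⟩, integral_congr_ae hrn]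

lemma KL_bdd {Q P : Measure X} [IsProbabilityMeasure Q] [IsProbabilityMeasure P] {C : ℝ}
    (hC : 0 ≤ C) (h : ∀ s, MeasurableSet s → Q s ≤ ENNReal.ofReal C * P s) :
    Q ≪ P ∧ ∃ d : ℝ, KL Q P = d := by
  have hac : Q ≪ P := by
    refine Measure.AbsolutelyContinuous.mk fun s hs h0 => ?_
    have := h s hs
    rw [h0] at this; simpa using this
  have hle : ∀ᵐ x ∂P, Q.rnDeriv P x ≤ ENNReal.ofReal C := by
    apply ae_le_of_forall_setLIntegral_le_of_sigmaFinite (Measure.measurable_rnDeriv Q P)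
    intro s hs _
    refine (Measure.setLIntegral_rnDeriv_le s).trans ?_
    simpa using h s hs
  have hQ : Q = P.withDensity (fun x => ENNReal.ofReal ((Q.rnDeriv P x).toReal)) := by
    conv_lhs => rw [← Measure.withDensity_rnDeriv_eq Q P hac]
    apply withDensity_congr_ae
    filter_upwards [Measure.rnDeriv_lt_top Q P] with x hx
    rw [ENNReal.ofReal_toReal hx.ne]
  have h1 : ∫⁻ x, ENNReal.ofReal ((Q.rnDeriv P x).toReal) ∂P = 1 := by
    have := congrArg (fun μ => μ Set.univ) hQ
    simp only [measure_univ] at this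
    rw [withDensity_apply _ MeasurableSet.univ] at this
    simpa using this.symm
  have := KL_density (Measure.measurable_rnDeriv Q P).ennreal_toReal (fun x => ENNReal.toReal_nonneg)
    (hle.mono fun x hx => ENNReal.toReal_le_of_le_ofReal hC hx) h1 hQ
  exact ⟨hac, _, this.2.2.2.2⟩


instance (P : Measure (X × Y)) [IsProbabilityMeasure P] : IsProbabilityMeasure (m1 P) :=
  Measure.isProbabilityMeasure_map measurable_fst.aemeasurable
instance (P : Measure (X × Y)) [IsProbabilityMeasure P] : IsProbabilityMeasure (m2 P) :=
  Measure.isProbabilityMeasure_map measurable_snd.aemeasurable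

lemma lint_P {P : Measure (X × Y)} [IsProbabilityMeasure P] {κ : Kernel Y X} [IsMarkovKernel κ]
    (hκ : IsCondKernel P κ) {f : X × Y → ℝ≥0∞} (hf : Measurable f) :
    ∫⁻ z, f z ∂P = ∫⁻ y, ∫⁻ x, f (x, y) ∂(κ y) ∂(m2 P) := by
  have hP : P = (m2 P ⊗ₘ κ).map Prod.swap := by
    have : IsProbabilityMeasure ((m2 P ⊗ₘ κ).map Prod.swap) :=
      Measure.isProbabilityMeasure_map measurable_swap.aemeasurable
    apply Measure.ext_prod
    intro s t hs ht
    rw [Measure.map_apply measurable_swap (hs.prod ht), Set.preimage_swap_prod,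
      Measure.compProd_apply_prod ht hs]
    exact hκ s t hs ht
  conv_lhs => rw [hP]
  rw [lintegral_map hf measurable_swap]
  exact Measure.lintegral_compProd (f := fun z : Y × X => f z.swap) (hf.comp measurable_swap)

lemma lint_m1 {P : Measure (X × Y)} [IsProbabilityMeasure P] {κ : Kernel Y X} [IsMarkovKernel κ]
    (hκ : IsCondKernel P κ) {f : X → ℝ≥0∞} (hf : Measurable f) :
    ∫⁻ x, f x ∂(m1 P) = ∫⁻ y, ∫⁻ x, f x ∂(κ y) ∂(m2 P) := by
  rw [m1, lintegral_map hf measurable_fst]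
  exact lint_P hκ (hf.comp measurable_fst)

lemma int_log_bdd {Q : Measure X} [IsProbabilityMeasure Q] {g : X → ℝ} (hg : Measurable g)
    {δ K : ℝ} (hδ : 0 < δ) (h1 : ∀ x, δ ≤ g x) (h2 : ∀ x, g x ≤ K) :
    Integrable (fun x => Real.log (g x)) Q := by
  refine Integrable.of_bound (C := |Real.log δ| + |Real.log K|) hg.log.aestronglyMeasurable
    (Eventually.of_forall fun x => ?_)
  have e1 := Real.log_le_log hδ (h1 x)
  have e2 := Real.log_le_log (hδ.trans_le (h1 x)) (h2 x)
  rw [Real.norm_eq_abs, abs_le]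
  constructor
  · have := neg_abs_le (Real.log δ); have := abs_nonneg (Real.log K); linarith
  · have := le_abs_self (Real.log K); have := abs_nonneg (Real.log δ); linarith

lemma core {P : Measure (X × Y)} [IsProbabilityMeasure P] {κ : Kernel Y X} [IsMarkovKernel κ]
    (hκ : IsCondKernel P κ) {g : X → ℝ} {F : Y → ℝ} (hg : Measurable g) (hF : Measurable F)
    {δ K : ℝ} (hδ : 0 < δ) (hg1 : ∀ x, δ ≤ g x) (hg2 : ∀ x, g x ≤ K)
    (hF1 : ∀ y, δ ≤ F y) (hF2 : ∀ y, F y ≤ K)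
    (hFg : ∀ y, ∫⁻ x, ENNReal.ofReal (g x) ∂(κ y) = ENNReal.ofReal (F y))
    {QX : Measure X} {QY : Measure Y} [IsProbabilityMeasure QX] [IsProbabilityMeasure QY]
    {π : Measure (X × Y)} (hπ : π ∈ couplings QX QY) {d t : ℝ} (hd : KL π P = d)
    (ht : KL QY (m2 P) = t) :
    -∫ y, Real.log (F y) ∂QY ≤ d - t - ∫ x, Real.log (g x) ∂QX := by
  obtain ⟨hπp, hπ1, hπ2⟩ := hπ
  obtain ⟨hac, hll, htt⟩ := KL_coe ht
  set ρ := fun y => (QY.rnDeriv (m2 P) y).toReal with hρ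
  have hρm : Measurable ρ := (Measure.measurable_rnDeriv QY _).ennreal_toReal
  have hρ0 : ∀ y, 0 ≤ ρ y := fun y => ENNReal.toReal_nonneg
  have hρpos : ∀ᵐ y ∂QY, 0 < ρ y := by
    have h1 := Measure.rnDeriv_pos hac
    have h2 := hac.ae_le (Measure.rnDeriv_lt_top QY (m2 P))
    filter_upwards [h1, h2] with x hx hx'
    exact ENNReal.toReal_pos hx.ne' hx'.ne
  have hgpos : ∀ x, 0 < g x := fun x => hδ.trans_le (hg1 x)
  have hFpos : ∀ x, 0 < F x := fun x => hδ.trans_le (hF1 x)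
  have hρ1 : ∫⁻ y, ENNReal.ofReal (ρ y) ∂(m2 P) ≤ 1 := by
    calc ∫⁻ y, ENNReal.ofReal (ρ y) ∂(m2 P) ≤ ∫⁻ y, QY.rnDeriv (m2 P) y ∂(m2 P) :=
          lintegral_mono fun y => ENNReal.ofReal_toReal_le
      _ ≤ QY Set.univ := Measure.lintegral_rnDeriv_le
      _ = 1 := measure_univ
  have mp1 : MeasurePreserving Prod.fst π QX := ⟨measurable_fst, hπ1⟩
  have mp2 : MeasurePreserving Prod.snd π QY := ⟨measurable_snd, hπ2⟩
  have i1 : Integrable (fun z : X × Y => Real.log (g z.1)) π :=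
    mp1.integrable_comp_of_integrable (int_log_bdd hg hδ hg1 hg2)
  have i2 : Integrable (fun z : X × Y => Real.log (F z.2)) π :=
    mp2.integrable_comp_of_integrable (int_log_bdd hF hδ hF1 hF2)
  have i3 : Integrable (fun z : X × Y => Real.log (ρ z.2)) π :=
    mp2.integrable_comp_of_integrable hll
  have v1 : ∫ z, Real.log (g z.1) ∂π = ∫ x, Real.log (g x) ∂QX := by
    rw [← hπ1, integral_map measurable_fst.aemeasurable hg.log.aestronglyMeasurable]
  have v2 : ∫ z, Real.log (F z.2) ∂π = ∫ x, Real.log (F x) ∂QY := by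
    rw [← hπ2, integral_map measurable_snd.aemeasurable hF.log.aestronglyMeasurable]
  have v3 : ∫ z, Real.log (ρ z.2) ∂π = t := by
    have hv : ∫ y, Real.log (ρ y) ∂(Measure.map Prod.snd π) = ∫ z, Real.log (ρ z.2) ∂π :=
      integral_map measurable_snd.aemeasurable hρm.log.aestronglyMeasurable
    rw [hπ2] at hv
    rw [htt]
    exact hv.symm
  have hae : ∀ᵐ z ∂π, 0 < ρ z.2 := mp2.quasiMeasurePreserving.ae hρpos
  have hlog : ∀ᵐ z ∂π, Real.log (ρ z.2) + (Real.log (g z.1) - Real.log (F z.2))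
      = Real.log (ρ z.2 * (g z.1 / F z.2)) := by
    filter_upwards [hae] with z hz
    rw [Real.log_mul hz.ne' (div_pos (hgpos _) (hFpos _)).ne',
      Real.log_div (hgpos _).ne' (hFpos _).ne']
  have hm : Measurable fun z : X × Y => ρ z.2 * (g z.1 / F z.2) := by fun_prop
  have i4 : Integrable (fun z : X × Y => Real.log (g z.1) - Real.log (F z.2)) π := i1.sub i2
  have := dv hd (f := fun z => ρ z.2 * (g z.1 / F z.2)) hm
    (hae.mono fun z hz => mul_pos hz (div_pos (hgpos _) (hFpos _)))
    ((i3.add i4).congr hlog) one_pos ?_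
  · rw [← integral_congr_ae hlog, integral_add i3 i4, integral_sub i1 i2, v1, v2, v3] at this
    simp at this
    linarith
  · rw [lint_P hκ hm.ennreal_ofReal]
    simp only [ENNReal.ofReal_one]
    refine le_trans (lintegral_mono fun y => ?_) hρ1
    have : ∀ x, ENNReal.ofReal (ρ y * (g x / F y))
        = ENNReal.ofReal (ρ y / F y) * ENNReal.ofReal (g x) := by
      intro x
      rw [← ENNReal.ofReal_mul (div_nonneg (hρ0 y) (hFpos y).le)]
      congr 1; ring
    simp only [this]
    rw [lintegral_const_mul _ hg.ennreal_ofReal, hFg,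
      ← ENNReal.ofReal_mul (div_nonneg (hρ0 y) (hFpos y).le), div_mul_cancel₀ _ (hFpos y).ne']

lemma step_upper {P : Measure (X × Y)} [IsProbabilityMeasure P] {κ : Kernel Y X} [IsMarkovKernel κ]
    (hκ : IsCondKernel P κ) {g : X → ℝ} {F : Y → ℝ} (hg : Measurable g) (hF : Measurable F)
    {δ K : ℝ} (hδ : 0 < δ) (hg1 : ∀ x, δ ≤ g x) (hg2 : ∀ x, g x ≤ K)
    (hF1 : ∀ y, δ ≤ F y) (hF2 : ∀ y, F y ≤ K)
    (hFg : ∀ y, ∫⁻ x, ENNReal.ofReal (g x) ∂(κ y) = ENNReal.ofReal (F y))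
    {q : ℝ} (hq1 : q < 1) (hq0 : q ≠ 0) {Z : ℝ} (hZ : 0 < Z)
    (hFZ : ∫⁻ y, ENNReal.ofReal (F y ^ q) ∂(m2 P) = ENNReal.ofReal Z)
    {QX : Measure X} [IsProbabilityMeasure QX] (hQX : QX ≪ m1 P) {s : ℝ}
    (hs : KL QX (m1 P) = s) :
    ((-(1 / q) * Real.log Z + ∫ x, Real.log (g x) ∂QX : ℝ) : EReal) ≤
      phiLT1 P (q / (q - 1)) s := by
  have hFpos : ∀ x, 0 < F x := fun x => hδ.trans_le (hF1 x)
  unfold phiLT1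
  rcases lt_or_gt_of_ne hq0 with hneg | hpos
  · rw [if_pos (div_pos_of_neg_of_neg hneg (by linarith))]
    -- construct QY
    let f : Y → ℝ := fun y => F y ^ q / Z
    have hfm : Measurable f := (hF.pow_const q).div_const Z
    have hfle : ∀ y, f y ≤ δ ^ q / Z := fun y => by
      simp only [f]
      gcongr ?_ / Z
      exact Real.rpow_le_rpow_of_nonpos hδ (hF1 y) hneg.le
    have hf1 : ∫⁻ y, ENNReal.ofReal (f y) ∂(m2 P) = 1 := by
      have : ∀ y, ENNReal.ofReal (f y) = ENNReal.ofReal (F y ^ q) * ENNReal.ofReal (Z⁻¹) := by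
        intro y
        rw [← ENNReal.ofReal_mul' (by positivity)]; rfl
      simp only [this]
      rw [lintegral_mul_const _ (hF.pow_const q).ennreal_ofReal, hFZ,
        ← ENNReal.ofReal_mul hZ.le, mul_inv_cancel₀ hZ.ne', ENNReal.ofReal_one]
    obtain ⟨hp, hac, hInt0, hpos, hKL⟩ := KL_density hfm
      (fun y => div_nonneg (Real.rpow_nonneg (hFpos y).le q) hZ.le)
      (Eventually.of_forall hfle) hf1 rfl
    set QY := (m2 P).withDensity (fun y => ENNReal.ofReal (f y)) with hQY
    set t := ∫ y, Real.log (f y) ∂QY with ht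
    have ht0 : 0 ≤ t := KL_real_nonneg hKL
    have htv : t = q * ∫ y, Real.log (F y) ∂QY - Real.log Z := by
      have : ∀ y, Real.log (f y) = q * Real.log (F y) - Real.log Z := by
        intro y
        simp only [f]
        rw [Real.log_div (Real.rpow_pos_of_pos (hFpos y) q).ne' hZ.ne', Real.log_rpow (hFpos y)]
      rw [ht]
      simp only [this]
      rw [integral_sub ((int_log_bdd hF hδ hF1 hF2).const_mul q) (integrable_const _),
        integral_const_mul]
      simp
    unfold phiSupR
    refine le_iSup_of_le t (le_iSup_of_le ht0 ?_)
    have hdiv : divE t ((q / (q - 1) : ℝ) : EReal) = ((t / (q / (q - 1)) : ℝ) : EReal) := by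
      unfold divE
      rw [if_neg (by simp)]
      simp
    rw [hdiv]
    refine EReal.le_sub_iff_add_le (by simp) (by simp) |>.2 ?_
    unfold phiU
    refine le_iSup_of_le QX <| le_iSup_of_le QY <| le_iSup_of_le inferInstance <|
      le_iSup_of_le hp <| le_iSup_of_le hQX <| le_iSup_of_le hac <| le_iSup_of_le hs <|
      le_iSup_of_le hKL ?_
    unfold Dmin
    refine le_iInf₂ fun π hπ => ?_
    rcases KL_cases π P with h | ⟨d, h⟩
    · rw [h]; exact le_top
    · rw [h]
      have := core hκ hg hF hδ hg1 hg2 hF1 hF2 hFg hπ h hKL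
      norm_cast
      have e1 : -(1 / q) * Real.log Z = t / q - ∫ y, Real.log (F y) ∂QY := by
        rw [htv]; field_simp; ring
      have e2 : t / (q / (q - 1)) = t - t / q := by
        have : q - 1 ≠ 0 := by linarith
        field_simp
      rw [e1, e2]
      linarith
  · have hr : q / (q - 1) < 0 := div_neg_of_pos_of_neg hpos (by linarith)
    rw [if_neg (by linarith)]
    unfold phiNeg
    refine le_iSup_of_le QX <| le_iSup_of_le inferInstance <| le_iSup_of_le hQX <|
      le_iSup_of_le hs ?_
    refine le_iInf fun QY => le_iInf fun hQYp => le_iInf fun hQY => ?_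
    have hD0 : 0 ≤ Dmin QX QY P := by
      unfold Dmin
      refine le_iInf₂ fun π hπ => ?_
      have := hπ.1
      exact KL_nonneg
    rcases KL_cases QY (m2 P) with h | ⟨t, h⟩
    · have : ediv (KL QY (m2 P)) (q / (q - 1)) = ⊥ := by
        unfold ediv
        rw [if_neg hr.ne, h]
        exact EReal.top_mul_coe_of_neg (inv_lt_zero.2 hr)
      rw [this, EReal.sub_bot (ne_of_gt (lt_of_lt_of_le (by simp) hD0))]
      exact le_top
    · have : ediv (KL QY (m2 P)) (q / (q - 1)) = ((t * (q / (q - 1))⁻¹ : ℝ) : EReal) := by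
        unfold ediv
        rw [if_neg hr.ne, h]
        norm_cast
      rw [this]
      refine EReal.le_sub_iff_add_le (Or.inl (EReal.coe_ne_bot _)) (Or.inl (EReal.coe_ne_top _)) |>.2 ?_
      unfold Dmin
      refine le_iInf₂ fun π hπ => ?_
      rcases KL_cases π P with h' | ⟨d, h'⟩
      · rw [h']; exact le_top
      · rw [h']
        have hc := core hκ hg hF hδ hg1 hg2 hF1 hF2 hFg hπ h' h
        have il := int_log_bdd (Q := QY) hF hδ hF1 hF2
        have hl : ∀ y, Real.log (F y ^ q) = q * Real.log (F y) := fun y => Real.log_rpow (hFpos y) q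
        have hdv := dv h (f := fun y => F y ^ q) (hF.pow_const q)
          (Eventually.of_forall fun y => Real.rpow_pos_of_pos (hFpos y) q)
          (by simp only [hl]; exact il.const_mul q) hZ hFZ.le
        simp only [hl] at hdv
        rw [integral_const_mul] at hdv
        norm_cast
        have e2 : t * (q / (q - 1))⁻¹ = t - t / q := by
          have : q - 1 ≠ 0 := by linarith
          field_simp
        have e3 : ∫ y, Real.log (F y) ∂QY ≤ t / q + (1 / q) * Real.log Z := by
          have : t / q + (1 / q) * Real.log Z = (t + Real.log Z) / q := by field_simp
          rw [this, le_div_iff₀ hpos]; linarith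
        rw [e2]
        linarith

lemma step_lower {P : Measure (X × Y)} [IsProbabilityMeasure P] {κ : Kernel Y X} [IsMarkovKernel κ]
    (hκ : IsCondKernel P κ) {g : X → ℝ} {F : Y → ℝ} (hg : Measurable g) (hF : Measurable F)
    (hg1 : ∀ x, 0 ≤ g x) (hg2 : ∀ x, g x ≤ 1)
    (hF1 : ∀ y, 0 ≤ F y) (hF2 : ∀ y, F y ≤ 1)
    (hFg : ∀ y, ∫⁻ x, ENNReal.ofReal (g x) ∂(κ y) = ENNReal.ofReal (F y))
    {q : ℝ} (hq1 : 1 ≤ q) {Z : ℝ} (hZ : 0 < Z)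
    (hFZ : ∫⁻ y, ENNReal.ofReal (F y ^ q) ∂(m2 P) = ENNReal.ofReal Z) :
    ∃ (QX : Measure X) (s : ℝ), IsProbabilityMeasure QX ∧ QX ≪ m1 P ∧ KL QX (m1 P) = s ∧
      (∀ᵐ x ∂QX, 0 < g x) ∧ Integrable (fun x => Real.log (g x)) QX ∧ 
      phiRinf P (conj q) s ≤
        ((-(1 / q) * Real.log Z + ∫ x, Real.log (g x) ∂QX : ℝ) : EReal) := by
  let f : X × Y → ℝ := fun z => g z.1 * F z.2 ^ (q - 1) / Z
  have hq0 : (0 : ℝ) < q := by linarith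
  have hfm : Measurable f := by
    have : Measurable fun y => F y ^ (q - 1) := hF.pow_const _
    fun_prop
  have hp1 : ∀ y, F y ^ (q - 1) ≤ 1 := fun y => Real.rpow_le_one (hF1 y) (hF2 y) (by linarith)
  have hp0 : ∀ y, 0 ≤ F y ^ (q - 1) := fun y => Real.rpow_nonneg (hF1 y) _
  have hf0 : ∀ z, 0 ≤ f z := fun z => div_nonneg (mul_nonneg (hg1 _) (hp0 _)) hZ.le
  have hfle : ∀ z, f z ≤ 1 / Z := fun z => by
    simp only [f]
    gcongr
    exact mul_le_one₀ (hg2 _) (hp0 _) (hp1 _)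
  have hf1 : ∫⁻ z, ENNReal.ofReal (f z) ∂P = 1 := by
    rw [lint_P hκ hfm.ennreal_ofReal]
    have : ∀ y, ∫⁻ x, ENNReal.ofReal (f (x, y)) ∂(κ y)
        = ENNReal.ofReal (F y ^ q) * ENNReal.ofReal (Z⁻¹) := by
      intro y
      have e : ∀ x, ENNReal.ofReal (f (x, y))
          = ENNReal.ofReal (F y ^ (q - 1) / Z) * ENNReal.ofReal (g x) := by
        intro x
        rw [← ENNReal.ofReal_mul (div_nonneg (hp0 y) hZ.le)]
        congr 1; simp only [f]; ring
      simp only [e]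
      rw [lintegral_const_mul _ hg.ennreal_ofReal, hFg, 
        ← ENNReal.ofReal_mul (div_nonneg (hp0 y) hZ.le), ← ENNReal.ofReal_mul' (by positivity)]
      congr 1
      have : F y ^ q = F y ^ (q - 1) * F y := by
        rcases (hF1 y).eq_or_lt with h | h
        · rw [← h, Real.zero_rpow hq0.ne']; simp
        · rw [← Real.rpow_add_one h.ne']; congr 1; ring
      rw [this]; ring
    simp only [this]
    rw [lintegral_mul_const _ (hF.pow_const q).ennreal_ofReal, hFZ,
      ← ENNReal.ofReal_mul hZ.le, mul_inv_cancel₀ hZ.ne', ENNReal.ofReal_one]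
  obtain ⟨hp, hac, hInt0, hpos, hKL⟩ := KL_density hfm hf0
      (Eventually.of_forall hfle) hf1 rfl
  set π := P.withDensity (fun y => ENNReal.ofReal (f y)) with hπ
  have hπle : ∀ s, MeasurableSet s → π s ≤ ENNReal.ofReal (1 / Z) * P s := by
    intro s hs
    rw [hπ, withDensity_apply _ hs]
    calc ∫⁻ z in s, ENNReal.ofReal (f z) ∂P ≤ ∫⁻ z in s, ENNReal.ofReal (1 / Z) ∂P :=
          lintegral_mono fun z => ENNReal.ofReal_le_ofReal (hfle z)
      _ = _ := by simp
  have hX : m1 π ≪ m1 P ∧ ∃ d : ℝ, KL (m1 π) (m1 P) = d := by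
    apply KL_bdd (C := 1 / Z) (by positivity)
    intro s hs
    rw [m1, m1, Measure.map_apply measurable_fst hs, Measure.map_apply measurable_fst hs]
    exact hπle _ (measurable_fst hs)
  have hY : m2 π ≪ m2 P ∧ ∃ d : ℝ, KL (m2 π) (m2 P) = d := by
    apply KL_bdd (C := 1 / Z) (by positivity)
    intro s hs
    rw [m2, m2, Measure.map_apply measurable_snd hs, Measure.map_apply measurable_snd hs]
    exact hπle _ (measurable_snd hs)
  obtain ⟨hXac, s, hs⟩ := hX
  obtain ⟨hYac, t, ht⟩ := hY
  have hgpos : ∀ᵐ z ∂π, 0 < g z.1 := by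
    filter_upwards [hpos] with z hz
    refine lt_of_le_of_ne (hg1 _) fun h => ?_
    simp [f, ← h] at hz
  have hPpos : ∀ᵐ z ∂π, 0 < F z.2 ^ (q - 1) := by
    filter_upwards [hpos] with z hz
    refine lt_of_le_of_ne (hp0 _) fun h => ?_
    simp [f, ← h] at hz
  have hlogP : ∀ᵐ z ∂π, Real.log (F z.2 ^ (q - 1)) = (q - 1) * Real.log (F z.2) := by
    filter_upwards [hPpos] with z hz
    rcases (hF1 z.2).eq_or_lt with h | h
    · rw [← h] at hz ⊢
      by_cases hq : q - 1 = 0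
      · simp [hq]
      · rw [Real.zero_rpow hq] at hz; simp at hz
    · rw [Real.log_rpow h]
  have hlog : ∀ᵐ z ∂π, Real.log (f z)
      = Real.log (g z.1) + ((q - 1) * Real.log (F z.2) - Real.log Z) := by
    filter_upwards [hgpos, hPpos, hlogP] with z h1 h2 h3
    simp only [f]
    rw [Real.log_div (mul_pos h1 h2).ne' hZ.ne', Real.log_mul h1.ne' h2.ne', h3]; ring
  have hlg : Integrable (fun z : X × Y => Real.log (g z.1)) π := by
    refine Integrable.mono' (hInt0.norm.add (integrable_const |Real.log Z|)) 
      (hg.comp measurable_fst).log.aestronglyMeasurable ?_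
    filter_upwards [hlog] with z hz
    have h1 : Real.log (g z.1) ≤ 0 := Real.log_nonpos (hg1 _) (hg2 _)
    have h2 : (q - 1) * Real.log (F z.2) ≤ 0 :=
      mul_nonpos_of_nonneg_of_nonpos (by linarith) (Real.log_nonpos (hF1 _) (hF2 _))
    simp only [Pi.add_apply]
    rw [Real.norm_eq_abs, Real.norm_eq_abs, abs_of_nonpos h1]
    have := neg_abs_le (Real.log (f z))
    have := neg_abs_le (Real.log Z)
    have := le_abs_self (Real.log Z)
    linarith
  have hlF : Integrable (fun z : X × Y => (q - 1) * Real.log (F z.2)) π := by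
    refine ((hInt0.sub hlg).add (integrable_const (Real.log Z))).congr ?_
    filter_upwards [hlog] with z hz
    simp only [Pi.add_apply, Pi.sub_apply]
    rw [hz]; ring
  have hlFZ : Integrable (fun z : X × Y => (q - 1) * Real.log (F z.2) - Real.log Z) π :=
    hlF.sub (integrable_const _)
  have mp1 : MeasurePreserving Prod.fst π (m1 π) := ⟨measurable_fst, rfl⟩
  have mp2 : MeasurePreserving Prod.snd π (m2 π) := ⟨measurable_snd, rfl⟩
  have v1 : ∫ z, Real.log (g z.1) ∂π = ∫ x, Real.log (g x) ∂(m1 π) := by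
    rw [m1, integral_map measurable_fst.aemeasurable hg.log.aestronglyMeasurable]
  have v2 : ∫ z, Real.log (F z.2) ∂π = ∫ x, Real.log (F x) ∂(m2 π) := by
    rw [m2, integral_map measurable_snd.aemeasurable hF.log.aestronglyMeasurable]
  have hdval : ∫ z, Real.log (f z) ∂π = ∫ x, Real.log (g x) ∂(m1 π)
      + ((q - 1) * ∫ y, Real.log (F y) ∂(m2 π) - Real.log Z) := by
    rw [integral_congr_ae hlog, integral_add hlg hlFZ, integral_sub hlF (integrable_const _),
      integral_const_mul, v1, v2]
    simp
  refine ⟨m1 π, s, inferInstance, hXac, hs, ?_, ?_, ?_⟩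
  · exact (ae_map_iff measurable_fst.aemeasurable (measurableSet_lt measurable_const hg)).2 hgpos
  · exact (mp1.integrable_comp hg.log.aestronglyMeasurable).1 hlg
  · have ht0 : 0 ≤ t := KL_real_nonneg ht
    unfold phiRinf
    refine iInf_le_of_le t (iInf_le_of_le ht0 ?_)
    have hphi : phiL P s t ≤ ((∫ z, Real.log (f z) ∂π : ℝ) : EReal) := by
      unfold phiL
      refine iInf_le_of_le (m1 π) <| iInf_le_of_le (m2 π) <| iInf_le_of_le inferInstance <|
        iInf_le_of_le inferInstance <| iInf_le_of_le hXac <| iInf_le_of_le hYac <|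
        iInf_le_of_le hs <| iInf_le_of_le ht ?_
      unfold Dmin
      refine iInf₂_le_of_le π ⟨hp, rfl, rfl⟩ ?_
      rw [hKL]
    by_cases hq : q = 1
    · have : divE t (conj q) = 0 := by simp [divE, conj, hq]
      rw [this, sub_zero]
      refine hphi.trans ?_
      rw [hdval, hq]
      apply le_of_eq
      congr 1; ring
    · have hq' : 0 < q - 1 := lt_of_le_of_ne (by linarith) (fun h => hq (by linarith))
      have : divE t (conj q) = ((t / (q / (q - 1)) : ℝ) : EReal) := by
        simp only [divE, conj, hq, if_false]
        rw [if_neg (by simp)]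
        simp
      rw [this]
      refine (EReal.sub_le_sub hphi le_rfl).trans ?_
      rw [← EReal.coe_sub, EReal.coe_le_coe_iff, hdval]
      have hFpos : ∀ᵐ y ∂(m2 π), 0 < F y := by
        refine (ae_map_iff measurable_snd.aemeasurable (measurableSet_lt measurable_const hF)).2 ?_
        filter_upwards [hPpos] with z hz
        refine lt_of_le_of_ne (hF1 _) fun h => ?_
        rw [← h, Real.zero_rpow hq'.ne'] at hz; simp at hz
      have hl : ∀ᵐ y ∂(m2 π), q * Real.log (F y) = Real.log (F y ^ q) := by
        filter_upwards [hFpos] with y hy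
        rw [Real.log_rpow hy]
      have hlF2 : Integrable (fun y => Real.log (F y)) (m2 π) := by
        apply (mp2.integrable_comp hF.log.aestronglyMeasurable).1
        refine (hlF.const_mul (q - 1)⁻¹).congr (Eventually.of_forall fun z => ?_)
        simp only [Function.comp]
        field_simp
      have hdv := dv ht (f := fun y => F y ^ q) (hF.pow_const q)
        (hFpos.mono fun y hy => Real.rpow_pos_of_pos hy q)
        ((hlF2.const_mul q).congr hl) hZ hFZ.le
      rw [← integral_congr_ae hl, integral_const_mul] at hdv
      have e : t / (q / (q - 1)) = (q - 1) / q * t := by field_simp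
      have e2 : (q - 1) / q * (q * ∫ y, Real.log (F y) ∂(m2 π)) ≤
          (q - 1) / q * (t + Real.log Z) := by
        gcongr
      have e3 : (q - 1) / q * (q * ∫ y, Real.log (F y) ∂(m2 π))
          = (q - 1) * ∫ y, Real.log (F y) ∂(m2 π) := by field_simp
      have e4 : (q - 1) / q * (t + Real.log Z)
          = (q - 1) / q * t + Real.log Z - 1 / q * Real.log Z := by field_simp; ring
      rw [e]
      linarith


instance instPiM (n : ℕ) (μ : Measure X) [IsProbabilityMeasure μ] : IsProbabilityMeasure (piM n μ) := by
  unfold piM; infer_instance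
instance instKpi {n : ℕ} (κ : Kernel Y X) [IsMarkovKernel κ] (y : Fin n → Y) :
    IsProbabilityMeasure (kpi κ y) := by
  unfold kpi; infer_instance

/-- section of a set -/
def sec {n : ℕ} (A : Set (Fin (n + 1) → X)) (x : X) : Set (Fin n → X) :=
  {v | (Fin.cons x v : Fin (n + 1) → X) ∈ A}

lemma meas_cons {n : ℕ} : Measurable fun z : X × (Fin n → X) => (Fin.cons z.1 z.2 : Fin (n + 1) → X) := by
  refine measurable_pi_iff.2 fun i => ?_
  refine Fin.cases ?_ (fun j => ?_) i
  · simpa using measurable_fst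
  · simp only [Fin.cons_succ]
    exact (measurable_pi_apply j).comp measurable_snd

lemma sec_meas {n : ℕ} {A : Set (Fin (n + 1) → X)} (hA : MeasurableSet A) (x : X) :
    MeasurableSet (sec A x) :=
  (meas_cons.comp measurable_prodMk_left) hA

lemma lint_pi_succ {n : ℕ} (μ : Fin (n + 1) → Measure X) [∀ i, IsProbabilityMeasure (μ i)]
    {f : (Fin (n + 1) → X) → ℝ≥0∞} (hf : Measurable f) :
    ∫⁻ z, f z ∂(Measure.pi μ) =
      ∫⁻ x, ∫⁻ v, f (Fin.cons x v) ∂(Measure.pi fun i : Fin n => μ i.succ) ∂(μ 0) := by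
  have h := (measurePreserving_piFinSuccAbove μ 0).symm
  rw [← h.map_eq, lintegral_map hf (MeasurableEquiv.measurable _), lintegral_prod]
  · simp only [Fin.zero_succAbove]
    refine lintegral_congr fun x => lintegral_congr fun v => ?_
    congr 1
    simp [MeasurableEquiv.piFinSuccAbove]
    rfl
  · exact (hf.comp (MeasurableEquiv.measurable _)).aemeasurable

lemma pi_succ_apply {n : ℕ} (μ : Fin (n + 1) → Measure X) [∀ i, IsProbabilityMeasure (μ i)]
    {A : Set (Fin (n + 1) → X)} (hA : MeasurableSet A) :
    Measure.pi μ A = ∫⁻ x, (Measure.pi fun i : Fin n => μ i.succ) (sec A x) ∂(μ 0) := by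
  rw [← lintegral_indicator_one hA, lint_pi_succ μ (measurable_one.indicator hA)]
  refine lintegral_congr fun x => ?_
  rw [← lintegral_indicator_one (sec_meas hA x)]
  rfl

lemma kpi_meas {n : ℕ} (κ : Kernel Y X) [IsMarkovKernel κ] :
    Measurable fun y : Fin n → Y => kpi κ y := by
  refine Measurable.measure_of_isPiSystem_of_isProbabilityMeasure generateFrom_pi.symm isPiSystem_pi ?_
  rintro _ ⟨s, hs, rfl⟩
  simp only [kpi, Measure.pi_pi]
  refine Finset.measurable_prod _ fun i _ => ?_
  exact (κ.measurable_coe (hs i (mem_univ _))).comp (measurable_pi_apply i)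

/-- product kernel -/
def kpiK (n : ℕ) (κ : Kernel Y X) [IsMarkovKernel κ] : Kernel (Fin n → Y) (Fin n → X) :=
  ⟨fun y => kpi κ y, kpi_meas κ⟩

instance instKpiK (n : ℕ) (κ : Kernel Y X) [IsMarkovKernel κ] : IsMarkovKernel (kpiK n κ) :=
  ⟨fun y => instKpi κ y⟩

lemma kpi_meas_set {n : ℕ} (κ : Kernel Y X) [IsMarkovKernel κ] {A : Set (Fin n → X)}
    (hA : MeasurableSet A) : Measurable fun y : Fin n → Y => kpi κ y A :=
  (kpiK n κ).measurable_coe hA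

lemma kpi_meas_sec {n : ℕ} (κ : Kernel Y X) [IsMarkovKernel κ] {A : Set (Fin (n + 1) → X)}
    (hA : MeasurableSet A) : Measurable fun z : X × (Fin n → Y) => kpi κ z.2 (sec A z.1) := by
  have ht : MeasurableSet {w : (X × (Fin n → Y)) × (Fin n → X) |
      (Fin.cons w.1.1 w.2 : Fin (n + 1) → X) ∈ A} :=
    (meas_cons.comp ((measurable_fst.comp measurable_fst).prodMk measurable_snd)) hA
  exact Kernel.measurable_kernel_prodMk_left
    (κ := (kpiK n κ).comap (Prod.snd : X × (Fin n → Y) → _) measurable_snd) ht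

lemma piM_meas_sec {n : ℕ} (μ : Measure X) [IsProbabilityMeasure μ] {A : Set (Fin (n + 1) → X)}
    (hA : MeasurableSet A) : Measurable fun x : X => piM n μ (sec A x) := by
  have ht : MeasurableSet {w : X × (Fin n → X) | (Fin.cons w.1 w.2 : Fin (n + 1) → X) ∈ A} :=
    meas_cons hA
  exact measurable_measure_prodMk_left ht

lemma piM_succ {n : ℕ} (μ : Measure X) [IsProbabilityMeasure μ] {A : Set (Fin (n + 1) → X)}
    (hA : MeasurableSet A) : piM (n + 1) μ A = ∫⁻ x, piM n μ (sec A x) ∂μ :=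
  pi_succ_apply (fun _ => μ) hA

lemma kpi_succ {n : ℕ} (κ : Kernel Y X) [IsMarkovKernel κ] {A : Set (Fin (n + 1) → X)}
    (hA : MeasurableSet A) (y0 : Y) (y : Fin n → Y) :
    kpi κ (Fin.cons y0 y : Fin (n + 1) → Y) A = ∫⁻ x, kpi κ y (sec A x) ∂(κ y0) := by
  have := pi_succ_apply (fun i => κ ((Fin.cons y0 y : Fin (n + 1) → Y) i)) hA
  simpa [kpi] using this

lemma lint_piM_succ {n : ℕ} (μ : Measure X) [IsProbabilityMeasure μ]
    {f : (Fin (n + 1) → X) → ℝ≥0∞} (hf : Measurable f) :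
    ∫⁻ z, f z ∂(piM (n + 1) μ) = ∫⁻ x, ∫⁻ v, f (Fin.cons x v) ∂(piM n μ) ∂μ :=
  lint_pi_succ (fun _ => μ) hf

lemma piM_mix {P : Measure (X × Y)} [IsProbabilityMeasure P] {κ : Kernel Y X} [IsMarkovKernel κ]
    (hκ : IsCondKernel P κ) (n : ℕ) {A : Set (Fin n → X)} (hA : MeasurableSet A) :
    piM n (m1 P) A = ∫⁻ y, kpi κ y A ∂(piM n (m2 P)) := by
  induction n with
  | zero =>
    have h1 : ∀ y : Fin 0 → Y, kpi κ y A = piM 0 (m1 P) A := by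
      intro y
      unfold kpi piM
      congr 2
      funext i
      exact i.elim0
    simp [h1]
  | succ n ih =>
    rw [lint_piM_succ _ (kpi_meas_set κ hA), piM_succ _ hA]
    simp_rw [fun x => ih (sec_meas hA x), kpi_succ κ hA]
    have hm := kpi_meas_sec κ hA
    rw [lint_m1 hκ (f := fun x => ∫⁻ y, kpi κ y (sec A x) ∂(piM n (m2 P)))]
    · refine lintegral_congr fun y0 => ?_
      rw [lintegral_lintegral_swap hm.aemeasurable]
    · exact Measurable.lintegral_prod_right' hm

/-- integral of the q-th power -/
def II (P : Measure (X × Y)) (κ : Kernel Y X) (q δ : ℝ) {n : ℕ} (A : Set (Fin n → X)) : ℝ≥0∞ :=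
  ∫⁻ y, (kpi κ y A + ENNReal.ofReal δ) ^ q ∂(piM n (m2 P))

section mink
variable {V : Type*} [MeasurableSpace V]

lemma mink_ge {μ : Measure X} {ν : Measure V} [IsProbabilityMeasure μ] [IsProbabilityMeasure ν]
    {f : X × V → ℝ≥0∞} (hf : Measurable f) (hf1 : ∀ z, f z ≤ 1) {q : ℝ} (hq : 1 ≤ q) :
    ∫⁻ v, (∫⁻ x, f (x, v) ∂μ) ^ q ∂ν ≤ (∫⁻ x, (∫⁻ v, f (x, v) ^ q ∂ν) ^ (1 / q) ∂μ) ^ q := by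
  have hq0 : 0 < q := by linarith
  set N : V → ℝ≥0∞ := fun v => ∫⁻ x, f (x, v) ∂μ with hN
  have hNm : Measurable N := hf.lintegral_prod_left'
  have hN1 : ∀ v, N v ≤ 1 := fun v => by
    calc N v ≤ ∫⁻ x, 1 ∂μ := lintegral_mono fun x => hf1 _
      _ = 1 := by simp
  set S := ∫⁻ v, N v ^ q ∂ν with hS
  have hSf : S ≠ ⊤ := by
    refine ne_top_of_le_ne_top ENNReal.one_ne_top ?_
    calc S ≤ ∫⁻ v, 1 ∂ν := lintegral_mono fun v => ENNReal.rpow_le_one (hN1 v) hq0.le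
      _ = 1 := by simp
  rcases eq_or_ne S 0 with h0 | h0
  · rw [h0]; exact zero_le
  have hfx : ∀ x, Measurable fun v => f (x, v) := fun x => hf.comp measurable_prodMk_left
  have hfv : ∀ v, Measurable fun x => f (x, v) := fun v => hf.comp measurable_prodMk_right
  have hB : ∀ x, ∫⁻ v, N v ^ (q - 1) * f (x, v) ∂ν
      ≤ S ^ (1 - 1 / q) * (∫⁻ v, f (x, v) ^ q ∂ν) ^ (1 / q) := by
    intro x
    have hp : 0 ≤ 1 - 1 / q := by
      rw [sub_nonneg, div_le_one hq0]; exact hq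
    have := ENNReal.lintegral_mul_norm_pow_le (μ := ν) (hNm.pow_const q).aemeasurable
      ((hfx x).pow_const q).aemeasurable hp (by positivity : 0 ≤ 1 / q) (by ring)
    refine le_trans (le_of_eq ?_) this
    refine lintegral_congr fun v => ?_
    rw [← ENNReal.rpow_mul, ← ENNReal.rpow_mul]
    congr 2
    · field_simp
    · rw [mul_one_div_cancel hq0.ne', ENNReal.rpow_one]
  have hSB : S = ∫⁻ x, ∫⁻ v, N v ^ (q - 1) * f (x, v) ∂ν ∂μ := by
    rw [lintegral_lintegral_swap]
    · refine lintegral_congr fun v => ?_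
      rw [lintegral_const_mul _ (hfv v)]
      change N v ^ q = N v ^ (q - 1) * N v
      conv_rhs => rw [← ENNReal.rpow_one (N v)]
      rw [← ENNReal.rpow_mul, one_mul, ← ENNReal.rpow_add_of_nonneg _ _ (by linarith) zero_le_one]
      congr 1; ring
    · exact (((hNm.comp measurable_snd).pow_const _).mul hf).aemeasurable
  set G := ∫⁻ x, (∫⁻ v, f (x, v) ^ q ∂ν) ^ (1 / q) ∂μ with hG
  have h1 : S ≤ S ^ (1 - 1 / q) * G := by
    calc S = _ := hSB
      _ ≤ ∫⁻ x, S ^ (1 - 1 / q) * (∫⁻ v, f (x, v) ^ q ∂ν) ^ (1 / q) ∂μ := lintegral_mono hB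
      _ = S ^ (1 - 1 / q) * G := by
        rw [lintegral_const_mul]
        exact ((hf.pow_const q).lintegral_prod_right').pow_const _
  have h2 : S ^ (1 / q) ≤ G := by
    have h3 : S = S ^ (1 - 1 / q) * S ^ (1 / q) := by
      rw [← ENNReal.rpow_add _ _ h0 hSf]; simp
    have h4 := h3.symm.le.trans h1
    refine (ENNReal.mul_le_mul_iff_right ?_ ?_).1 h4
    · exact (ENNReal.rpow_pos (pos_iff_ne_zero.2 h0) hSf).ne'
    · exact ENNReal.rpow_ne_top_of_ne_zero h0 hSf
  calc S = (S ^ (1 / q)) ^ q := by rw [← ENNReal.rpow_mul, one_div_mul_cancel hq0.ne', ENNReal.rpow_one]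
    _ ≤ G ^ q := ENNReal.rpow_le_rpow h2 hq0.le

lemma rpow_anti {x y : ℝ≥0∞} (h : x ≤ y) {q : ℝ} (hq : q ≤ 0) : y ^ q ≤ x ^ q := by
  have := ENNReal.rpow_le_rpow h (neg_nonneg.2 hq)
  rw [ENNReal.rpow_neg, ENNReal.rpow_neg] at this
  exact ENNReal.inv_le_inv.1 this

lemma norm_bdd {ν : Measure V} [IsProbabilityMeasure ν] {F : V → ℝ≥0∞} {a b : ℝ≥0∞}
    (h1 : ∀ v, a ≤ F v) (h2 : ∀ v, F v ≤ b) {q : ℝ} (hq : q ≠ 0) :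
    a ≤ (∫⁻ v, F v ^ q ∂ν) ^ (1 / q) ∧ (∫⁻ v, F v ^ q ∂ν) ^ (1 / q) ≤ b := by
  have e : ∀ c : ℝ≥0∞, c = (∫⁻ _ : V, c ^ q ∂ν) ^ (1 / q) := fun c => by
    simp only [lintegral_const, measure_univ, mul_one]
    rw [← ENNReal.rpow_mul, mul_one_div_cancel hq, ENNReal.rpow_one]
  rcases hq.lt_or_gt with h | h
  · have h' : 1 / q ≤ 0 := one_div_nonpos.2 h.le
    constructor
    · conv_lhs => rw [e a]
      exact rpow_anti (lintegral_mono fun v => rpow_anti (h1 v) h.le) h'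
    · conv_rhs => rw [e b]
      exact rpow_anti (lintegral_mono fun v => rpow_anti (h2 v) h.le) h'
  · have h' : 0 ≤ 1 / q := one_div_nonneg.2 h.le
    constructor
    · conv_lhs => rw [e a]
      exact ENNReal.rpow_le_rpow (lintegral_mono fun v => ENNReal.rpow_le_rpow (h1 v) h.le) h'
    · conv_rhs => rw [e b]
      exact ENNReal.rpow_le_rpow (lintegral_mono fun v => ENNReal.rpow_le_rpow (h2 v) h.le) h'

lemma rpow_inv_q {x : ℝ≥0∞} {q : ℝ} (hq : q ≠ 0) : (x ^ (1 / q)) ^ q = x := by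
  rw [← ENNReal.rpow_mul, one_div_mul_cancel hq, ENNReal.rpow_one]

lemma rpow_q_inv {x : ℝ≥0∞} {q : ℝ} (hq : q ≠ 0) : (x ^ q) ^ (1 / q) = x := by
  rw [← ENNReal.rpow_mul, mul_one_div_cancel hq, ENNReal.rpow_one]

lemma rpow_ok {x : ℝ≥0∞} (h0 : x ≠ 0) (ht : x ≠ ⊤) (q : ℝ) : x ^ q ≠ 0 ∧ x ^ q ≠ ⊤ :=
  ⟨(ENNReal.rpow_pos (pos_iff_ne_zero.2 h0) ht).ne', ENNReal.rpow_ne_top_of_ne_zero h0 ht⟩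

lemma int_ok {ν : Measure V} [IsProbabilityMeasure ν] {F : V → ℝ≥0∞} {a b : ℝ≥0∞} (ha : a ≠ 0)
    (hb : b ≠ ⊤) (h1 : ∀ v, a ≤ F v) (h2 : ∀ v, F v ≤ b) {q : ℝ} (hq : q ≠ 0) :
    (∫⁻ v, F v ^ q ∂ν) ≠ 0 ∧ (∫⁻ v, F v ^ q ∂ν) ≠ ⊤ := by
  obtain ⟨e1, e2⟩ := norm_bdd (ν := ν) h1 h2 hq
  have := rpow_ok (ne_bot_of_le_ne_bot ha e1) (ne_top_of_le_ne_top hb e2) q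
  rwa [rpow_inv_q hq] at this

lemma mink_lt {μ : Measure X} {ν : Measure V} [IsProbabilityMeasure μ] [IsProbabilityMeasure ν]
    {f : X × V → ℝ≥0∞} (hf : Measurable f) {a b : ℝ≥0∞} (ha : a ≠ 0) (hb : b ≠ ⊤)
    (hfa : ∀ z, a ≤ f z) (hfb : ∀ z, f z ≤ b) {q : ℝ} (hq : q < 1) (hq0 : q ≠ 0) :
    ∫⁻ x, (∫⁻ v, f (x, v) ^ q ∂ν) ^ (1 / q) ∂μ ≤ (∫⁻ v, (∫⁻ x, f (x, v) ∂μ) ^ q ∂ν) ^ (1 / q) := by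
  set N : V → ℝ≥0∞ := fun v => ∫⁻ x, f (x, v) ∂μ with hN
  have hNm : Measurable N := hf.lintegral_prod_left'
  have hNa : ∀ v, a ≤ N v := fun v => by
    calc a = ∫⁻ x, a ∂μ := by simp
      _ ≤ N v := lintegral_mono fun x => hfa _
  have hNb : ∀ v, N v ≤ b := fun v => by
    calc N v ≤ ∫⁻ x, b ∂μ := lintegral_mono fun x => hfb _
      _ = b := by simp
  have hNok : ∀ v, N v ≠ 0 ∧ N v ≠ ⊤ := fun v =>
    ⟨ne_bot_of_le_ne_bot ha (hNa v), ne_top_of_le_ne_top hb (hNb v)⟩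
  have hfok : ∀ z, f z ≠ 0 ∧ f z ≠ ⊤ := fun v =>
    ⟨ne_bot_of_le_ne_bot ha (hfa v), ne_top_of_le_ne_top hb (hfb v)⟩
  set S := ∫⁻ v, N v ^ q ∂ν with hS
  obtain ⟨hS0, hSf⟩ : S ≠ 0 ∧ S ≠ ⊤ := int_ok ha hb hNa hNb hq0
  have hfx : ∀ x, Measurable fun v => f (x, v) := fun x => hf.comp measurable_prodMk_left
  have hfv : ∀ v, Measurable fun x => f (x, v) := fun v => hf.comp measurable_prodMk_right
  have hB : ∀ x, (∫⁻ v, f (x, v) ^ q ∂ν) ^ (1 / q)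
      ≤ S ^ (1 / q - 1) * ∫⁻ v, N v ^ (q - 1) * f (x, v) ∂ν := by
    intro x
    set B := ∫⁻ v, N v ^ (q - 1) * f (x, v) ∂ν with hBdef
    have hBm : Measurable fun v => N v ^ (q - 1) * f (x, v) := (hNm.pow_const _).mul (hfx x)
    rcases hq0.lt_or_gt with h | h
    · set I := ∫⁻ v, f (x, v) ^ q ∂ν with hI
      obtain ⟨hI0, hIf⟩ : I ≠ 0 ∧ I ≠ ⊤ := int_ok ha hb (fun v => hfa _) (fun v => hfb _) hq0
      have hq1 : q - 1 < 0 := by linarith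
      have hθ : 0 < q / (q - 1) := div_pos_of_neg_of_neg h hq1
      have key := ENNReal.lintegral_mul_norm_pow_le (μ := ν) hBm.aemeasurable
        ((hfx x).pow_const q).aemeasurable hθ.le (q := -(1 / (q - 1)))
        (neg_nonneg.2 (one_div_nonpos.2 hq1.le)) (by field_simp [hq1.ne]; ring)
      have hl : S ≤ B ^ (q / (q - 1)) * I ^ (-(1 / (q - 1))) := by
        refine le_trans (le_of_eq ?_) key
        refine lintegral_congr fun v => ?_
        rw [ENNReal.mul_rpow_of_nonneg _ _ hθ.le, ← ENNReal.rpow_mul, ← ENNReal.rpow_mul, mul_assoc,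
          ← ENNReal.rpow_add _ _ (hfok _).1 (hfok _).2]
        have e1 : (q - 1) * (q / (q - 1)) = q := by field_simp [hq1.ne]
        have e2 : q / (q - 1) + q * -(1 / (q - 1)) = 0 := by ring
        rw [e1, e2]; simp
      have hl2 : S * I ^ (1 / (q - 1)) ≤ B ^ (q / (q - 1)) := by
        calc S * I ^ (1 / (q - 1)) ≤ B ^ (q / (q - 1)) * I ^ (-(1 / (q - 1))) * I ^ (1 / (q - 1)) := by
              gcongr
          _ = B ^ (q / (q - 1)) := by
            rw [mul_assoc, ← ENNReal.rpow_add _ _ hI0 hIf]; simp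
      have hl3 := ENNReal.rpow_le_rpow hl2 (inv_pos.2 hθ).le
      rw [ENNReal.mul_rpow_of_nonneg _ _ (inv_pos.2 hθ).le, ← ENNReal.rpow_mul, ← ENNReal.rpow_mul,
        mul_inv_cancel₀ hθ.ne', ENNReal.rpow_one] at hl3
      have e1 : 1 / (q - 1) * (q / (q - 1))⁻¹ = 1 / q := by field_simp [hq1.ne]
      have e2 : (q / (q - 1))⁻¹ = -(1 / q - 1) := by field_simp [hq1.ne]; ring
      rw [e1, e2] at hl3
      calc I ^ (1 / q) = S ^ (1 / q - 1) * (S ^ (-(1 / q - 1)) * I ^ (1 / q)) := by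
            rw [← mul_assoc, ← ENNReal.rpow_add _ _ hS0 hSf]; simp
        _ ≤ S ^ (1 / q - 1) * B := by gcongr
    · have key := ENNReal.lintegral_mul_norm_pow_le (μ := ν) hBm.aemeasurable
        (hNm.pow_const q).aemeasurable h.le (q := 1 - q) (by linarith) (by ring)
      have hl : ∫⁻ v, f (x, v) ^ q ∂ν ≤ B ^ q * S ^ (1 - q) := by
        refine le_trans (le_of_eq ?_) key
        refine lintegral_congr fun v => ?_
        rw [ENNReal.mul_rpow_of_nonneg _ _ h.le, ← ENNReal.rpow_mul, ← ENNReal.rpow_mul,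
          mul_right_comm, ← ENNReal.rpow_add _ _ (hNok _).1 (hNok _).2]
        have e1 : (q - 1) * q + q * (1 - q) = 0 := by ring
        rw [e1]; simp
      have hl3 := ENNReal.rpow_le_rpow hl (one_div_pos.2 h).le
      rw [ENNReal.mul_rpow_of_nonneg _ _ (one_div_pos.2 h).le, rpow_q_inv hq0,
        ← ENNReal.rpow_mul] at hl3
      have e2 : (1 - q) * (1 / q) = 1 / q - 1 := by field_simp
      rw [e2, mul_comm] at hl3
      exact hl3
  have hSB : S = ∫⁻ x, ∫⁻ v, N v ^ (q - 1) * f (x, v) ∂ν ∂μ := by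
    rw [lintegral_lintegral_swap]
    · refine lintegral_congr fun v => ?_
      rw [lintegral_const_mul _ (hfv v)]
      change N v ^ q = N v ^ (q - 1) * N v
      conv_rhs => rw [← ENNReal.rpow_one (N v)]
      rw [← ENNReal.rpow_mul, one_mul, ← ENNReal.rpow_add _ _ (hNok v).1 (hNok v).2]
      congr 1; ring
    · exact (((hNm.comp measurable_snd).pow_const _).mul hf).aemeasurable
  calc ∫⁻ x, (∫⁻ v, f (x, v) ^ q ∂ν) ^ (1 / q) ∂μ
      ≤ ∫⁻ x, S ^ (1 / q - 1) * ∫⁻ v, N v ^ (q - 1) * f (x, v) ∂ν ∂μ := lintegral_mono hB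
    _ = S ^ (1 / q - 1) * S := by
      rw [lintegral_const_mul, ← hSB]
      exact ((((hNm.comp measurable_snd).pow_const _).mul hf)).lintegral_prod_right'
    _ = S ^ (1 / q) := by
      nth_rewrite 2 [← ENNReal.rpow_one S]
      rw [← ENNReal.rpow_add _ _ hS0 hSf]; simp

end mink


/-- the norm, shifted by `δ` -/
def NN (P : Measure (X × Y)) (κ : Kernel Y X) (q δ : ℝ) {n : ℕ} (A : Set (Fin n → X)) : ℝ≥0∞ :=
  (II P κ q δ A) ^ (1 / q)

lemma NN_meas {P : Measure (X × Y)} [IsProbabilityMeasure P] {κ : Kernel Y X} [IsMarkovKernel κ]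
    {q δ : ℝ} {n : ℕ} {A : Set (Fin (n + 1) → X)} (hA : MeasurableSet A) :
    Measurable fun x => NN P κ q δ (sec A x) :=
  ((((kpi_meas_sec κ hA).add_const _).pow_const _).lintegral_prod_right').pow_const _

lemma kpi_add {κ : Kernel Y X} [IsMarkovKernel κ] {δ : ℝ} {n : ℕ} {A : Set (Fin (n + 1) → X)}
    (hA : MeasurableSet A) (y0 : Y) (y : Fin n → Y) :
    kpi κ (Fin.cons y0 y : Fin (n + 1) → Y) A + ENNReal.ofReal δ
      = ∫⁻ x, (kpi κ y (sec A x) + ENNReal.ofReal δ) ∂(κ y0) := by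
  rw [kpi_succ κ hA, lintegral_add_right _ measurable_const]
  simp

lemma II_succ {P : Measure (X × Y)} [IsProbabilityMeasure P] {κ : Kernel Y X} [IsMarkovKernel κ]
    {q δ : ℝ} {n : ℕ} {A : Set (Fin (n + 1) → X)} (hA : MeasurableSet A) :
    II P κ q δ A = ∫⁻ y0, ∫⁻ y, (∫⁻ x, (kpi κ y (sec A x) + ENNReal.ofReal δ) ∂(κ y0)) ^ q
      ∂(piM n (m2 P)) ∂(m2 P) := by
  unfold II
  rw [lint_piM_succ _ (((kpi_meas_set κ hA).add_const _).pow_const _)]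
  simp_rw [kpi_add hA]

lemma II_ge {P : Measure (X × Y)} [IsProbabilityMeasure P] {κ : Kernel Y X} [IsMarkovKernel κ]
    {q : ℝ} (hq : 1 ≤ q) {n : ℕ} {A : Set (Fin (n + 1) → X)} (hA : MeasurableSet A) :
    II P κ q 0 A ≤ ∫⁻ y0, (∫⁻ x, NN P κ q 0 (sec A x) ∂(κ y0)) ^ q ∂(m2 P) := by
  rw [II_succ hA]
  refine lintegral_mono fun y0 => ?_
  refine mink_ge (f := fun z : X × (Fin n → Y) => kpi κ z.2 (sec A z.1) + ENNReal.ofReal 0)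
    ((kpi_meas_sec κ hA).add_const _) (fun z => ?_) hq
  simp only [ENNReal.ofReal_zero, add_zero]
  exact prob_le_one

lemma add_lo {κ : Kernel Y X} [IsMarkovKernel κ] {δ : ℝ} {n : ℕ} (A : Set (Fin n → X)) (y : Fin n → Y) :
    ENNReal.ofReal δ ≤ kpi κ y A + ENNReal.ofReal δ := le_add_self

lemma add_hi {κ : Kernel Y X} [IsMarkovKernel κ] {δ : ℝ} (hδ : 0 ≤ δ) {n : ℕ} (A : Set (Fin n → X)) (y : Fin n → Y) :
    kpi κ y A + ENNReal.ofReal δ ≤ ENNReal.ofReal (1 + δ) := by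
  rw [ENNReal.ofReal_add zero_le_one hδ, ENNReal.ofReal_one]
  gcongr
  exact prob_le_one

lemma NN_bdd {P : Measure (X × Y)} [IsProbabilityMeasure P] {κ : Kernel Y X} [IsMarkovKernel κ]
    {q δ : ℝ} (hδ : 0 ≤ δ) (hq0 : q ≠ 0) {n : ℕ} (A : Set (Fin n → X)) :
    ENNReal.ofReal δ ≤ NN P κ q δ A ∧ NN P κ q δ A ≤ ENNReal.ofReal (1 + δ) :=
  norm_bdd (fun y => add_lo A y) (fun y => add_hi hδ A y) hq0

lemma II_lt {P : Measure (X × Y)} [IsProbabilityMeasure P] {κ : Kernel Y X} [IsMarkovKernel κ]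
    {q δ : ℝ} (hδ : 0 < δ) (hq : q < 1) (hq0 : q ≠ 0) {n : ℕ} {A : Set (Fin (n + 1) → X)}
    (hA : MeasurableSet A) :
    (∫⁻ y0, (∫⁻ x, NN P κ q δ (sec A x) ∂(κ y0)) ^ q ∂(m2 P)) ^ (1 / q) ≤ NN P κ q δ A := by
  have h : ∀ y0, ∫⁻ x, NN P κ q δ (sec A x) ∂(κ y0) ≤
      (∫⁻ y, (∫⁻ x, (kpi κ y (sec A x) + ENNReal.ofReal δ) ∂(κ y0)) ^ q ∂(piM n (m2 P))) ^ (1 / q) :=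
    fun y0 => mink_lt (f := fun z : X × (Fin n → Y) => kpi κ z.2 (sec A z.1) + ENNReal.ofReal δ)
      ((kpi_meas_sec κ hA).add_const _) (a := ENNReal.ofReal δ) (b := ENNReal.ofReal (1 + δ))
      (by simpa using hδ) ENNReal.ofReal_ne_top (fun z => add_lo _ _) (fun z => add_hi hδ.le _ _) hq hq0
  unfold NN
  rw [II_succ hA]
  rcases hq0.lt_or_gt with hs | hs
  · refine rpow_anti (lintegral_mono fun y0 => ?_) (one_div_nonpos.2 hs.le)
    have := rpow_anti (h y0) hs.le
    rwa [rpow_inv_q hq0] at this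
  · refine ENNReal.rpow_le_rpow (lintegral_mono fun y0 => ?_) (one_div_nonneg.2 hs.le)
    have := ENNReal.rpow_le_rpow (h y0) hs.le
    rwa [rpow_inv_q hq0] at this

/-- minus log probability -/
def LL (P : Measure (X × Y)) {n : ℕ} (A : Set (Fin n → X)) : ℝ := -Real.log (piM n (m1 P) A).toReal
/-- minus log norm -/
def HH (P : Measure (X × Y)) (κ : Kernel Y X) (q δ : ℝ) {n : ℕ} (A : Set (Fin n → X)) : ℝ :=
  -Real.log (NN P κ q δ A).toReal

lemma ptot {P : Measure (X × Y)} [IsProbabilityMeasure P] {n : ℕ} {A : Set (Fin (n + 1) → X)}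
    (hA : MeasurableSet A) :
    ∫⁻ x, ENNReal.ofReal (piM n (m1 P) (sec A x)).toReal ∂(m1 P)
      = ENNReal.ofReal (piM (n + 1) (m1 P) A).toReal := by
  rw [ENNReal.ofReal_toReal (measure_ne_top _ _), piM_succ _ hA]
  refine lintegral_congr fun x => ?_
  rw [ENNReal.ofReal_toReal (measure_ne_top _ _)]

lemma base_set {A : Set (Fin 0 → X)} {μ : Measure (Fin 0 → X)} (h : μ A ≠ 0) : A = Set.univ := by
  have hne : A.Nonempty := by
    by_contra hc
    rw [Set.not_nonempty_iff_eq_empty] at hc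
    simp [hc] at h
  obtain ⟨a, ha⟩ := hne
  ext b
  simp [Subsingleton.elim b a, ha]

lemma upper_ind {P : Measure (X × Y)} [IsProbabilityMeasure P] {κ : Kernel Y X} [IsMarkovKernel κ]
    (hκ : IsCondKernel P κ) {q δ : ℝ} (hδ : 0 < δ) (hq : q < 1) (hq0 : q ≠ 0) (n : ℕ) :
    ∀ A : Set (Fin n → X), MeasurableSet A → piM n (m1 P) A ≠ 0 →
      (LL P A, HH P κ q δ A) ∈ Tn (CU (phiLT1 P (q / (q - 1)))) n := by
  induction n with
  | zero =>
    intro A hA h0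
    left
    have hu := base_set h0
    subst hu
    refine ⟨rfl, by simp [LL], ?_⟩
    simp only [HH, NN, II, measure_univ, lintegral_const, mul_one]
    rw [rpow_q_inv hq0, Left.neg_nonpos_iff]
    apply Real.log_nonneg
    rw [ENNReal.toReal_add (by simp) (by simp), ENNReal.toReal_ofReal hδ.le]
    simp [hδ.le]
  | succ n ih =>
    intro A hA h0
    set C := CU (phiLT1 P (q / (q - 1))) with hC
    have hgood : Good C := good_CU _
    set p : X → ℝ := fun x => (piM n (m1 P) (sec A x)).toReal with hp
    set c : ℝ := (piM (n + 1) (m1 P) A).toReal with hc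
    have hc0 : 0 < c := ENNReal.toReal_pos h0 (measure_ne_top _ _)
    have hpm : Measurable p := (piM_meas_sec (m1 P) hA).ennreal_toReal
    have hp0 : ∀ x, 0 ≤ p x := fun x => ENNReal.toReal_nonneg
    have hp1 : ∀ x, p x ≤ 1 := fun x => by
      have := ENNReal.toReal_mono ENNReal.one_ne_top (prob_le_one (μ := piM n (m1 P)) (s := sec A x))
      simpa using this
    have htot := ptot (P := P) hA
    set g : X → ℝ := fun x => (NN P κ q δ (sec A x)).toReal with hg
    have hδ' : ENNReal.ofReal δ ≠ 0 := by simpa using hδ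
    have hNb := fun x => NN_bdd (P := P) (κ := κ) hδ.le hq0 (sec A x)
    have hNt : ∀ x, NN P κ q δ (sec A x) ≠ ⊤ := fun x =>
      ne_top_of_le_ne_top ENNReal.ofReal_ne_top (hNb x).2
    have hgm : Measurable g := (NN_meas hA).ennreal_toReal
    have toR : ∀ x : ℝ≥0∞, ENNReal.ofReal δ ≤ x → x ≤ ENNReal.ofReal (1 + δ) →
        δ ≤ x.toReal ∧ x.toReal ≤ 1 + δ := by
      intro x h1 h2
      have ht := ne_top_of_le_ne_top ENNReal.ofReal_ne_top h2
      exact ⟨(ENNReal.ofReal_le_iff_le_toReal ht).1 h1,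
        (ENNReal.le_ofReal_iff_toReal_le ht (by linarith)).1 h2⟩
    set FE : Y → ℝ≥0∞ := fun y0 => ∫⁻ x, NN P κ q δ (sec A x) ∂(κ y0) with hFE
    have hFEm : Measurable FE := (NN_meas hA).lintegral_kernel
    have hFE1 : ∀ y, ENNReal.ofReal δ ≤ FE y := fun y => by
      calc ENNReal.ofReal δ = ∫⁻ x, ENNReal.ofReal δ ∂(κ y) := by simp
        _ ≤ FE y := lintegral_mono fun x => (hNb x).1
    have hFE2 : ∀ y, FE y ≤ ENNReal.ofReal (1 + δ) := fun y => by
      calc FE y ≤ ∫⁻ x, ENNReal.ofReal (1 + δ) ∂(κ y) := lintegral_mono fun x => (hNb x).2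
        _ = _ := by simp
    have hFEt : ∀ y, FE y ≠ ⊤ := fun y => ne_top_of_le_ne_top ENNReal.ofReal_ne_top (hFE2 y)
    set F : Y → ℝ := fun y => (FE y).toReal with hF
    have hFb := fun y => toR _ (hFE1 y) (hFE2 y)
    set W := ∫⁻ y0, FE y0 ^ q ∂(m2 P) with hW
    obtain ⟨hW0, hWt⟩ : W ≠ 0 ∧ W ≠ ⊤ := int_ok hδ' ENNReal.ofReal_ne_top hFE1 hFE2 hq0
    have hWZ : 0 < W.toReal := ENNReal.toReal_pos hW0 hWt
    have hFZ : ∫⁻ y, ENNReal.ofReal (F y ^ q) ∂(m2 P) = ENNReal.ofReal W.toReal := by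
      rw [ENNReal.ofReal_toReal hWt]
      refine lintegral_congr fun y => ?_
      rw [← ENNReal.ofReal_rpow_of_pos (hδ.trans_le (hFb y).1), ENNReal.ofReal_toReal (hFEt y)]
    -- tilted measure
    set f : X → ℝ := fun x => p x / c with hf
    have hfm : Measurable f := hpm.div_const c
    have hf1 : ∫⁻ x, ENNReal.ofReal (f x) ∂(m1 P) = 1 := by
      have : ∀ x, ENNReal.ofReal (f x) = ENNReal.ofReal (p x) * (ENNReal.ofReal c)⁻¹ := fun x => by
        rw [hf, ENNReal.ofReal_div_of_pos hc0, div_eq_mul_inv]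
      simp_rw [this]
      rw [lintegral_mul_const _ hpm.ennreal_ofReal, htot]
      exact ENNReal.mul_inv_cancel (ENNReal.ofReal_pos.2 hc0).ne' ENNReal.ofReal_ne_top
    obtain ⟨hQp, hQac, hQi, hQpos, hQKL⟩ := KL_density (P := m1 P) hfm
      (fun x => div_nonneg (hp0 x) hc0.le) (C := 1 / c)
      (Eventually.of_forall fun x => div_le_div_of_nonneg_right (hp1 x) hc0.le) hf1 rfl
    set Q := (m1 P).withDensity (fun x => ENNReal.ofReal (f x)) with hQ
    have hppos : ∀ᵐ x ∂Q, 0 < p x := by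
      filter_upwards [hQpos] with x hx
      by_contra hcon
      have h1 : p x = 0 := le_antisymm (not_lt.1 hcon) (hp0 x)
      simp [hf, h1] at hx
    have hLeq : ∀ᵐ x ∂Q, Real.log (f x) = LL P A - LL P (sec A x) := by
      filter_upwards [hppos] with x hx
      simp only [hf, LL]
      rw [Real.log_div hx.ne' hc0.ne']
      ring
    have hLi : Integrable (fun x => LL P (sec A x)) Q := by
      have h1 : Integrable (fun x => LL P A - Real.log (f x)) Q := (integrable_const _).sub hQi
      refine h1.congr ?_
      filter_upwards [hLeq] with x hx
      rw [hx]; ring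
    have hLint : ∫ x, Real.log (f x) ∂Q = LL P A - ∫ x, LL P (sec A x) ∂Q := by
      rw [integral_congr_ae hLeq, integral_sub (integrable_const _) hLi]
      simp
    have hgb := fun x => toR _ (hNb x).1 (hNb x).2
    have hlg : Integrable (fun x => Real.log (g x)) Q :=
      int_log_bdd hgm hδ (fun x => (hgb x).1) (fun x => (hgb x).2)
    have hst := step_upper hκ hgm hFEm.ennreal_toReal hδ (fun x => (hgb x).1) (fun x => (hgb x).2)
      (fun y => (hFb y).1) (fun y => (hFb y).2)
      (fun y => by
        rw [ENNReal.ofReal_toReal (hFEt y)]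
        exact lintegral_congr fun x => ENNReal.ofReal_toReal (hNt x)) hq hq0 hWZ hFZ hQac hQKL
    have hs0 : 0 ≤ ∫ x, Real.log (f x) ∂Q := KL_real_nonneg hQKL
    have hmem : (∫ x, Real.log (f x) ∂Q, -(1 / q) * Real.log W.toReal + ∫ x, Real.log (g x) ∂Q) ∈ C := by
      intro ε hε
      exact hull_down (subset_convexHull ℝ _ ⟨hs0, hst⟩) (sub_le_self _ (le_of_lt hε))
    have hH : ∀ x, HH P κ q δ (sec A x) = -Real.log (g x) := fun x => rfl
    have hj := jensen_lt (good_Tn hgood n) Q hLi (h := fun x => HH P κ q δ (sec A x)) hlg.neg (by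
      filter_upwards [hppos] with x hx
      exact ih _ (sec_meas hA x) (ENNReal.toReal_pos_iff.1 hx).1.ne')
    have hfin := Tn_add hgood hj hmem
    have e1 : ∫ x, Real.log (f x) ∂Q + ∫ x, LL P (sec A x) ∂Q = LL P A := by rw [hLint]; ring
    have e2 : -(1 / q) * Real.log W.toReal + ∫ x, Real.log (g x) ∂Q + ∫ x, HH P κ q δ (sec A x) ∂Q
        = -(1 / q) * Real.log W.toReal := by
      simp_rw [hH]
      rw [integral_neg]; ring
    rw [e1, e2] at hfin
    refine (good_Tn hgood (n + 1)).down _ _ _ hfin ?_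
    have hle := II_lt (P := P) (κ := κ) hδ hq hq0 hA
    have hle2 : (W ^ (1 / q)).toReal ≤ (NN P κ q δ A).toReal :=
      ENNReal.toReal_mono (ne_top_of_le_ne_top ENNReal.ofReal_ne_top (NN_bdd hδ.le hq0 A).2) hle
    have hWp : 0 < (W ^ (1 / q)).toReal :=
      ENNReal.toReal_pos (rpow_ok hW0 hWt _).1 (rpow_ok hW0 hWt _).2
    have hlog := Real.log_le_log hWp hle2
    rw [← ENNReal.toReal_rpow, Real.log_rpow hWZ] at hlog
    unfold HH
    linarith


lemma NN_le_one {P : Measure (X × Y)} [IsProbabilityMeasure P] {κ : Kernel Y X} [IsMarkovKernel κ]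
    {q : ℝ} (hq0 : q ≠ 0) {n : ℕ} (A : Set (Fin n → X)) : NN P κ q 0 A ≤ 1 := by
  have := (NN_bdd (P := P) (κ := κ) le_rfl hq0 A).2
  simpa using this

lemma II_le_p {P : Measure (X × Y)} [IsProbabilityMeasure P] {κ : Kernel Y X} [IsMarkovKernel κ]
    (hκ : IsCondKernel P κ) {q : ℝ} (hq : 1 ≤ q) {n : ℕ} {A : Set (Fin n → X)}
    (hA : MeasurableSet A) : II P κ q 0 A ≤ piM n (m1 P) A := by
  rw [piM_mix hκ n hA]
  refine lintegral_mono fun y => ?_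
  simp only [ENNReal.ofReal_zero, add_zero]
  calc kpi κ y A ^ q ≤ kpi κ y A ^ (1 : ℝ) := ENNReal.rpow_le_rpow_of_exponent_ge prob_le_one hq
    _ = _ := ENNReal.rpow_one _

lemma II_pos {P : Measure (X × Y)} [IsProbabilityMeasure P] {κ : Kernel Y X} [IsMarkovKernel κ]
    (hκ : IsCondKernel P κ) {q : ℝ} (hq : 0 < q) {n : ℕ} {A : Set (Fin n → X)}
    (hA : MeasurableSet A) (h0 : piM n (m1 P) A ≠ 0) : II P κ q 0 A ≠ 0 := by
  intro h
  apply h0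
  have hm := kpi_meas_set κ hA
  rw [piM_mix hκ n hA, lintegral_eq_zero_iff hm]
  unfold II at h
  rw [lintegral_eq_zero_iff ((hm.add_const _).pow_const _)] at h
  filter_upwards [h] with y hy
  simp only [ENNReal.ofReal_zero, add_zero, Pi.zero_apply] at hy ⊢
  exact (ENNReal.rpow_eq_zero_iff_of_pos hq).1 hy

lemma lower_ind {P : Measure (X × Y)} [IsProbabilityMeasure P] {κ : Kernel Y X} [IsMarkovKernel κ]
    (hκ : IsCondKernel P κ) {q : ℝ} (hq : 1 ≤ q) (n : ℕ) :
    ∀ A : Set (Fin n → X), MeasurableSet A → piM n (m1 P) A ≠ 0 →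
      (LL P A, -HH P κ q 0 A) ∈ Tn (CL (phiRinf P (conj q))) n := by
  have hqp : 0 < q := by linarith
  have hq0 : q ≠ 0 := hqp.ne'
  induction n with
  | zero =>
    intro A hA h0
    left
    have hu := base_set h0
    subst hu
    refine ⟨rfl, by simp [LL], ?_⟩
    simp [HH, NN, II]
  | succ n ih =>
    intro A hA h0
    set C := CL (phiRinf P (conj q)) with hC
    have hgood : Good C := good_CL _
    set p : X → ℝ := fun x => (piM n (m1 P) (sec A x)).toReal with hp
    set c : ℝ := (piM (n + 1) (m1 P) A).toReal with hc
    have hc0 : 0 < c := ENNReal.toReal_pos h0 (measure_ne_top _ _)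
    have hpm : Measurable p := (piM_meas_sec (m1 P) hA).ennreal_toReal
    have hp0 : ∀ x, 0 ≤ p x := fun x => ENNReal.toReal_nonneg
    have hp1 : ∀ x, p x ≤ 1 := fun x => by
      have := ENNReal.toReal_mono ENNReal.one_ne_top (prob_le_one (μ := piM n (m1 P)) (s := sec A x))
      simpa using this
    have htot := ptot (P := P) hA
    set g : X → ℝ := fun x => (NN P κ q 0 (sec A x)).toReal with hg
    have hNb := fun x => NN_le_one (P := P) (κ := κ) hq0 (sec A x)
    have hNt : ∀ x, NN P κ q 0 (sec A x) ≠ ⊤ := fun x =>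
      ne_top_of_le_ne_top ENNReal.one_ne_top (hNb x)
    have hgm : Measurable g := (NN_meas hA).ennreal_toReal
    have toR : ∀ x : ℝ≥0∞, x ≤ 1 → x.toReal ≤ 1 := by
      intro x h2
      have := ENNReal.toReal_mono ENNReal.one_ne_top h2
      simpa using this
    set FE : Y → ℝ≥0∞ := fun y0 => ∫⁻ x, NN P κ q 0 (sec A x) ∂(κ y0) with hFE
    have hFEm : Measurable FE := (NN_meas hA).lintegral_kernel
    have hFE2 : ∀ y, FE y ≤ 1 := fun y => by
      calc FE y ≤ ∫⁻ x, 1 ∂(κ y) := lintegral_mono fun x => hNb x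
        _ = _ := by simp
    have hFEt : ∀ y, FE y ≠ ⊤ := fun y => ne_top_of_le_ne_top ENNReal.one_ne_top (hFE2 y)
    set F : Y → ℝ := fun y => (FE y).toReal with hF
    set W := ∫⁻ y0, FE y0 ^ q ∂(m2 P) with hW
    have hWle : II P κ q 0 A ≤ W := II_ge hq hA
    have hI0 : II P κ q 0 A ≠ 0 := II_pos hκ hqp hA h0
    have hW0 : W ≠ 0 := ne_bot_of_le_ne_bot hI0 hWle
    have hWt : W ≠ ⊤ := by
      refine ne_top_of_le_ne_top ENNReal.one_ne_top ?_
      calc W ≤ ∫⁻ y, 1 ∂(m2 P) := lintegral_mono fun v => ENNReal.rpow_le_one (hFE2 v) hqp.le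
        _ = 1 := by simp
    have hWZ : 0 < W.toReal := ENNReal.toReal_pos hW0 hWt
    have hFZ : ∫⁻ y, ENNReal.ofReal (F y ^ q) ∂(m2 P) = ENNReal.ofReal W.toReal := by
      rw [ENNReal.ofReal_toReal hWt]
      refine lintegral_congr fun y => ?_
      rw [← ENNReal.ofReal_rpow_of_nonneg ENNReal.toReal_nonneg hqp.le, ENNReal.ofReal_toReal (hFEt y)]
    obtain ⟨Q, s, hQp, hQac, hQKL, hgpos, hlg, hst⟩ := step_lower hκ hgm hFEm.ennreal_toReal
      (fun x => ENNReal.toReal_nonneg) (fun x => toR _ (hNb x))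
      (fun y => ENNReal.toReal_nonneg) (fun y => toR _ (hFE2 y))
      (fun y => by
        rw [ENNReal.ofReal_toReal (hFEt y)]
        exact lintegral_congr fun x => ENNReal.ofReal_toReal (hNt x)) hq hWZ hFZ
    have hs0 : 0 ≤ s := KL_real_nonneg hQKL
    have hgp : ∀ x, g x ^ q ≤ p x := fun x => by
      have h1 := ENNReal.toReal_mono (measure_ne_top _ _) (II_le_p hκ hq (sec_meas hA x))
      have h2 : g x ^ q = (II P κ q 0 (sec A x)).toReal := by
        simp only [hg]
        rw [ENNReal.toReal_rpow, NN, rpow_inv_q hq0]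
      rw [h2]; exact h1
    have hppos : ∀ᵐ x ∂Q, 0 < p x := by
      filter_upwards [hgpos] with x hx
      exact (Real.rpow_pos_of_pos hx q).trans_le (hgp x)
    have hLi : Integrable (fun x => LL P (sec A x)) Q := by
      refine (hlg.const_mul (-q)).mono' hpm.log.neg.aestronglyMeasurable ?_
      filter_upwards [hgpos] with x hx
      have h1 := Real.log_le_log (Real.rpow_pos_of_pos hx q) (hgp x)
      rw [Real.log_rpow hx] at h1
      have h2 : Real.log (p x) ≤ 0 := Real.log_nonpos (hp0 x) (hp1 x)
      have h3 : LL P (sec A x) = -Real.log (p x) := rfl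
      rw [h3, Real.norm_eq_abs, abs_of_nonneg (by linarith)]
      linarith
    have hlp : Integrable (fun x => Real.log (p x)) Q := by
      have := hLi.neg
      refine this.congr (Eventually.of_forall fun x => ?_)
      simp [LL, hp]
    have hdv := dv hQKL hpm hppos hlp hc0 htot.le
    have hLint : ∫ x, LL P (sec A x) ∂Q = -∫ x, Real.log (p x) ∂Q := by
      rw [← integral_neg]; rfl
    have hmem : (s, -(-(1 / q) * Real.log W.toReal + ∫ x, Real.log (g x) ∂Q)) ∈ C := by
      intro ε hε
      refine ⟨s, le_rfl, hull_up (subset_convexHull ℝ _ ⟨hs0, hst⟩) ?_⟩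
      rw [neg_neg]
      exact le_add_of_nonneg_right (le_of_lt hε)
    have hH : ∀ x, -HH P κ q 0 (sec A x) = Real.log (g x) := fun x => neg_neg _
    have hj := jensen_lt (good_Tn hgood n) Q hLi (h := fun x => -HH P κ q 0 (sec A x))
      (by simp_rw [hH]; exact hlg) (by
      filter_upwards [hppos] with x hx
      exact ih _ (sec_meas hA x) (ENNReal.toReal_pos_iff.1 hx).1.ne')
    have hfin := Tn_add hgood hj hmem
    have e2 : -(-(1 / q) * Real.log W.toReal + ∫ x, Real.log (g x) ∂Q) + ∫ x, -HH P κ q 0 (sec A x) ∂Q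
        = (1 / q) * Real.log W.toReal := by
      simp_rw [hH]
      ring
    rw [e2] at hfin
    have hfin2 : (LL P A, (1 / q) * Real.log W.toReal) ∈ Tn C (n + 1) := by
      refine CL_Tn_left hfin ?_
      rw [hLint]
      have : LL P A = -Real.log c := rfl
      linarith
    refine (good_Tn hgood (n + 1)).down _ _ _ hfin2 ?_
    have hIt : II P κ q 0 A ≠ ⊤ := ne_top_of_le_ne_top hWt hWle
    have hlog := Real.log_le_log (ENNReal.toReal_pos hI0 hIt) (ENNReal.toReal_mono hWt hWle)
    unfold HH NN
    rw [neg_neg, ← ENNReal.toReal_rpow, Real.log_rpow (ENNReal.toReal_pos hI0 hIt)]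
    exact mul_le_mul_of_nonneg_left hlog (one_div_nonneg.2 hqp.le)

lemma enorm_eq (P : Measure (X × Y)) (κ : Kernel Y X) (q : ℝ) {n : ℕ} (A : Set (Fin n → X)) :
    enorm (piM n (m2 P)) (fun y => kpi κ y A) q = NN P κ q 0 A := by
  simp [enorm, NN, II]

lemma elog_val {x : ℝ≥0∞} (h0 : x ≠ 0) (ht : x ≠ ⊤) : elog x = ((Real.log x.toReal : ℝ) : EReal) := by
  simp [elog, h0, ht]

lemma limit_le {P : Measure (X × Y)} [IsProbabilityMeasure P] {κ : Kernel Y X} [IsMarkovKernel κ]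
    {q : ℝ} (hq : q < 1) (hq0 : q ≠ 0) {n : ℕ} {A : Set (Fin n → X)} (hA : MeasurableSet A)
    {c : ℝ≥0∞} (h : ∀ δ : ℝ, 0 < δ → c ≤ NN P κ q δ A) : c ≤ NN P κ q 0 A := by
  have hm := kpi_meas_set κ hA
  set d : ℕ → ℝ := fun k => 1 / ((k : ℝ) + 1) with hd
  have hdp : ∀ k, 0 < d k := fun k => by simp only [hd]; positivity
  have hd0 : Tendsto d atTop (𝓝 0) := tendsto_one_div_add_atTop_nhds_zero_nat
  have hde : Tendsto (fun k => ENNReal.ofReal (d k)) atTop (𝓝 0) := by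
    have := ENNReal.tendsto_ofReal hd0
    simpa using this
  rcases hq0.lt_or_gt with hs | hs
  · have h1 : ∀ k, II P κ q (d k) A ≤ c ^ q := fun k => by
      have := rpow_anti (h (d k) (hdp k)) hs.le
      rwa [NN, rpow_inv_q hq0] at this
    have h2 : II P κ q 0 A ≤ c ^ q := by
      have e : ∀ y, (kpi κ y A + ENNReal.ofReal 0) ^ q
          = liminf (fun k => (kpi κ y A + ENNReal.ofReal (d k)) ^ q) atTop := by
        intro y
        refine (Tendsto.liminf_eq ?_).symm
        refine (ENNReal.continuous_rpow_const.tendsto _).comp ?_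
        rw [ENNReal.ofReal_zero]
        exact tendsto_const_nhds.add hde
      unfold II
      simp_rw [e]
      refine (lintegral_liminf_le fun k => (hm.add_const _).pow_const _).trans ?_
      exact liminf_le_of_le (by isBoundedDefault) fun b hb => by
        obtain ⟨k, hk⟩ := hb.exists
        exact hk.trans (h1 k)
    have := rpow_anti h2 (one_div_nonpos.2 hs.le)
    rwa [rpow_q_inv hq0] at this
  · have h1 : ∀ k, c ^ q ≤ II P κ q 0 A + ENNReal.ofReal (d k) ^ q := fun k => by
      have h3 := ENNReal.rpow_le_rpow (h (d k) (hdp k)) hs.le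
      rw [NN, rpow_inv_q hq0] at h3
      refine h3.trans ?_
      calc II P κ q (d k) A
          ≤ ∫⁻ y, ((kpi κ y A + ENNReal.ofReal 0) ^ q + ENNReal.ofReal (d k) ^ q) ∂(piM n (m2 P)) := by
            refine lintegral_mono fun y => ?_
            rw [ENNReal.ofReal_zero, add_zero]
            exact ENNReal.rpow_add_le_add_rpow _ _ hs.le hq.le
        _ = _ := by
            rw [lintegral_add_right _ measurable_const]
            simp [II]
    have h2 : c ^ q ≤ II P κ q 0 A := by
      have ht : Tendsto (fun k => II P κ q 0 A + ENNReal.ofReal (d k) ^ q) atTop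
          (𝓝 (II P κ q 0 A + 0 ^ q)) :=
        tendsto_const_nhds.add ((ENNReal.continuous_rpow_const.tendsto _).comp hde)
      rw [ENNReal.zero_rpow_of_pos hs, add_zero] at ht
      exact ge_of_tendsto' ht h1
    have := ENNReal.rpow_le_rpow h2 (one_div_nonneg.2 hs.le)
    rwa [rpow_q_inv hq0] at this

theorem main (P : Measure (X × Y)) [IsProbabilityMeasure P]
    (κ : Kernel Y X) [IsMarkovKernel κ] (hκ : IsCondKernel P κ)
    (n : ℕ) (hn : 1 ≤ n)
    (A : Set (Fin n → X)) (hA : MeasurableSet A)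
    (α : ℝ) (hαA : piM n (m1 P) A = ENNReal.ofReal (Real.exp (-((n : ℝ) * α)))) :
    (∀ q : ℝ, 1 ≤ q →
      ThetaGe1 P (conj q) α ≤
        -((((n : ℝ)⁻¹ : ℝ) : EReal) *
          elog (enorm (piM n (m2 P)) (fun y => kpi κ y A) q))) ∧
    (∀ q : ℝ, q < 1 → q ≠ 0 →
      (0 < α →
        -((((n : ℝ)⁻¹ : ℝ) : EReal) *
            elog (enorm (piM n (m2 P)) (fun y => kpi κ y A) q)) ≤
          uce1 (phiLT1 P (q / (q - 1))) α) ∧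
      (α = 0 →
        -((((n : ℝ)⁻¹ : ℝ) : EReal) *
            elog (enorm (piM n (m2 P)) (fun y => kpi κ y A) q)) ≤ (0 : EReal))) := by
  have hn0 : (0 : ℝ) < n := by exact_mod_cast hn
  have hnn : n ≠ 0 := by omega
  have h0 : piM n (m1 P) A ≠ 0 := by
    rw [hαA]; exact (ENNReal.ofReal_pos.2 (Real.exp_pos _)).ne'
  have hL : LL P A = n * α := by
    unfold LL
    rw [hαA, ENNReal.toReal_ofReal (Real.exp_pos _).le, Real.log_exp, neg_neg]
  have hLn : LL P A / n = α := by rw [hL]; field_simp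
  refine ⟨fun q hq => ?_, fun q hq hq0 => ⟨fun hα => ?_, fun hα => ?_⟩⟩
  · rw [enorm_eq]
    have hqp : 0 < q := by linarith
    have hNt : NN P κ q 0 A ≠ ⊤ := ne_top_of_le_ne_top ENNReal.one_ne_top (NN_le_one hqp.ne' A)
    have hI0 := II_pos hκ hqp hA h0
    have hN0 : NN P κ q 0 A ≠ 0 := fun hz => hI0 ((ENNReal.rpow_eq_zero_iff_of_pos (one_div_pos.2 hqp)).1 hz)
    rw [elog_val hN0 hNt, ← EReal.coe_mul, ← EReal.coe_neg]
    rcases lower_ind hκ hq n A hA h0 with h | h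
    · exact absurd h.1 hnn
    · have h2 := h.2
      simp only at h2
      rw [hLn, neg_div] at h2
      refine (CL_le h2).trans (le_of_eq ?_)
      congr 1
      unfold HH
      ring
  · rw [enorm_eq]
    have hNt : NN P κ q 0 A ≠ ⊤ := ne_top_of_le_ne_top ENNReal.one_ne_top (NN_le_one hq0 A)
    have hU : ∀ δ : ℝ, 0 < δ → ((HH P κ q δ A / n : ℝ) : EReal) ≤ uce1 (phiLT1 P (q / (q - 1))) α := by
      intro δ hδ
      rcases upper_ind hκ hδ hq hq0 n A hA h0 with h | h
      · exact absurd h.1 hnn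
      · have h2 := h.2
        simp only at h2
        rw [hLn] at h2
        exact CU_le h2
    generalize uce1 (phiLT1 P (q / (q - 1))) α = U at hU
    induction U with
    | bot => 
      have := hU 1 one_pos
      simp at this
    | top => exact le_top
    | coe u =>
      have hc : ENNReal.ofReal (Real.exp (-(n * u))) ≤ NN P κ q 0 A := by
        refine limit_le hq hq0 hA fun δ hδ => ?_
        have h1 : HH P κ q δ A / n ≤ u := by exact_mod_cast hU δ hδ
        rw [div_le_iff₀ hn0] at h1
        have hb := NN_bdd (P := P) (κ := κ) hδ.le hq0 A
        have ht := ne_top_of_le_ne_top ENNReal.ofReal_ne_top hb.2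
        have hz : NN P κ q δ A ≠ 0 := ne_bot_of_le_ne_bot (ENNReal.ofReal_pos.2 hδ).ne' hb.1
        rw [ENNReal.ofReal_le_iff_le_toReal ht]
        rw [← Real.le_log_iff_exp_le (ENNReal.toReal_pos hz ht)]
        unfold HH at h1
        linarith
      have hN0 : NN P κ q 0 A ≠ 0 := ne_bot_of_le_ne_bot (ENNReal.ofReal_pos.2 (Real.exp_pos _)).ne' hc
      rw [ENNReal.ofReal_le_iff_le_toReal hNt, ← Real.le_log_iff_exp_le (ENNReal.toReal_pos hN0 hNt)] at hc
      rw [elog_val hN0 hNt, ← EReal.coe_mul, ← EReal.coe_neg, EReal.coe_le_coe_iff]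
      have h3 := mul_le_mul_of_nonneg_left hc (inv_pos.2 hn0).le
      have h4 : (n : ℝ)⁻¹ * -(n * u) = -u := by field_simp
      linarith
  · subst hα
    have hp1 : piM n (m1 P) A = 1 := by rw [hαA]; simp
    have hm := kpi_meas_set κ hA
    rw [piM_mix hκ n hA] at hp1
    have hae : ∀ᵐ y ∂(piM n (m2 P)), kpi κ y A = 1 := by
      have h5 : ∫⁻ y, (1 - kpi κ y A) ∂(piM n (m2 P)) = 0 := by
        rw [lintegral_sub hm (by rw [hp1]; simp) (Eventually.of_forall fun y => prob_le_one), hp1]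
        simp
      replace h5 := (lintegral_eq_zero_iff (f := fun y => 1 - kpi κ y A) (measurable_const.sub hm)).1 h5
      filter_upwards [h5] with y hy
      exact le_antisymm prob_le_one (tsub_eq_zero_iff_le.1 hy)
    have hE : enorm (piM n (m2 P)) (fun y => kpi κ y A) q = 1 := by
      unfold enorm
      rw [lintegral_congr_ae (g := fun _ => 1) (by
        filter_upwards [hae] with y hy
        rw [hy, ENNReal.one_rpow])]
      simp
    rw [hE, elog_val one_ne_zero ENNReal.one_ne_top]
    simp

/-- Pointwise strong q-stability bounds; Theorem `thm:strongsse-2-1`. -/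
theorem statement13 [TopologicalSpace X] [PolishSpace X] [BorelSpace X]
    [TopologicalSpace Y] [PolishSpace Y] [BorelSpace Y]
    (P : Measure (X × Y)) [IsProbabilityMeasure P]
    (hndX : ∀ x : X, m1 P ≠ Measure.dirac x) (hndY : ∀ y : Y, m2 P ≠ Measure.dirac y)
    (κ : Kernel Y X) [IsMarkovKernel κ] (hκ : IsCondKernel P κ)
    (n : ℕ) (hn : 1 ≤ n)
    (A : Set (Fin n → X)) (hA : MeasurableSet A)
    (α : ℝ) (hαA : piM n (m1 P) A = ENNReal.ofReal (Real.exp (-((n : ℝ) * α)))) :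
    (∀ q : ℝ, 1 ≤ q →
      ThetaGe1 P (conj q) α ≤
        -((((n : ℝ)⁻¹ : ℝ) : EReal) *
          elog (enorm (piM n (m2 P)) (fun y => kpi κ y A) q))) ∧
    (∀ q : ℝ, q < 1 → q ≠ 0 →
      (0 < α →
        -((((n : ℝ)⁻¹ : ℝ) : EReal) *
            elog (enorm (piM n (m2 P)) (fun y => kpi κ y A) q)) ≤
          uce1 (phiLT1 P (q / (q - 1))) α) ∧
      (α = 0 →
        -((((n : ℝ)⁻¹ : ℝ) : EReal) *
            elog (enorm (piM n (m2 P)) (fun y => kpi κ y A) q)) ≤ (0 : EReal))) := by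
  exact main P κ hκ n hn A hA α hαA

end BL
end
end

section
/- Minimax equality for bilinear expectations on finite × Polish spaces: let 𝒳 be a finite set, 𝒴 a Polish space, a ∈ ℝ, b : 𝒳 × 𝒴 → [a, +∞] a measurable extended-real-valued function, and B a nonempty convex subset of the set of Borel probability measures on 𝒴. Define g(Q_X, Q_Y) := E_{(X,Y) ∼ Q_X ⊗ Q_Y}[b(X,Y)] for probability measures Q_X on 𝒳 and Q_Y ∈ B. Then min over Q_X of sup over Q_Y ∈ B of g(Q_X, Q_Y) equals sup over Q_Y ∈ B of min over Q_X of g(Q_X, Q_Y). -/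
open MeasureTheory ProbabilityTheory Set Filter
open scoped ENNReal NNReal BigOperators Classical Topology

noncomputable section

namespace BL

variable {X : Type*} {Y : Type*} [MeasurableSpace X] [MeasurableSpace Y]

/-! ### Definitions for Statement 16 -/

/-- Truncation `EReal → ℝ≥0∞` (negatives to `0`, `⊤` to `⊤`). -/
def er2en (x : EReal) : ℝ≥0∞ := if x = ⊤ then ⊤ else ENNReal.ofReal x.toReal

/-- The bilinear expectation `g(Q_X,Q_Y) = E_{Q_X ⊗ Q_Y}[b]`, for `b` valued in `[a,∞]`,
written as `a + E[b - a]` (valued in `[a,∞]`). -/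
def bilin [Fintype X] (a : ℝ) (b : X × Y → EReal) (QX : Measure X) (QY : Measure Y) :
    EReal :=
  (a : EReal) +
    ((∑ x : X, QX {x} * ∫⁻ y, er2en (b (x, y) - (a : EReal)) ∂QY : ℝ≥0∞) : EReal)

lemma minimax_core {X : Type*} [Fintype X] (C : Set (X → ℝ≥0∞))
    (hne : C.Nonempty)
    (hC : ∀ u ∈ C, ∀ v ∈ C, ∀ t : ℝ, 0 ≤ t → t ≤ 1 →
      (fun x => ENNReal.ofReal t * u x + ENNReal.ofReal (1 - t) * v x) ∈ C)
    (r : ℝ) (hr : ∀ u ∈ C, ∃ x, u x < ENNReal.ofReal r) :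
    ∃ q : X → ℝ, (∀ x, 0 ≤ q x) ∧ ∑ x, q x = 1 ∧
      ∀ u ∈ C, ∑ x, ENNReal.ofReal (q x) * u x ≤ ENNReal.ofReal r := by
  set D : Set (X → ℝ) := {d | ∃ c ∈ C, ∀ x, ENNReal.ofReal (d x) ≤ c x} with hD
  set S : Set (X → ℝ) := Set.pi Set.univ (fun _ => Set.Ioi r) with hS
  have hSo : IsOpen S := isOpen_set_pi Set.finite_univ (fun _ _ => isOpen_Ioi)
  have hSc : Convex ℝ S := convex_pi (fun _ _ => convex_Ioi r)
  have hDc : Convex ℝ D := by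
    rintro d ⟨c, hc, hdc⟩ e ⟨c', hc', hec⟩ s t hs ht hst
    obtain rfl : t = 1 - s := by linarith
    refine ⟨_, hC c hc c' hc' s hs (by linarith), fun x => ?_⟩
    simp only [Pi.add_apply, Pi.smul_apply, smul_eq_mul]
    refine ENNReal.ofReal_add_le.trans ?_
    rw [ENNReal.ofReal_mul hs, ENNReal.ofReal_mul ht]
    gcongr
    · exact hdc x
    · exact hec x
  have hdisj : Disjoint S D := by
    rw [Set.disjoint_left]
    rintro d hd ⟨c, hc, hdc⟩
    obtain ⟨x, hx⟩ := hr c hc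
    have h1 : r < d x := hd x (Set.mem_univ x)
    exact absurd ((ENNReal.ofReal_le_ofReal h1.le).trans (hdc x)) (not_le.2 hx)
  obtain ⟨f, w, hfS, hfD⟩ := geometric_hahn_banach_open hSc hSo hDc hdisj
  set p : X → ℝ := fun x => - f (Pi.single x 1) with hp
  have hf : ∀ d : X → ℝ, f d = - ∑ x, p x * d x := by
    intro d
    have : d = ∑ x, d x • (Pi.single x (1:ℝ) : X → ℝ) := by
      ext y; simp [Finset.sum_apply, Pi.single_apply]
    conv_lhs => rw [this]
    simp [hp, mul_comm]
  obtain ⟨c0, hc0⟩ := hne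
  have hdom : ∀ d ∈ D, ∑ x, p x * d x ≤ -w := by
    intro d hd
    have := hfD d hd
    rw [hf] at this; linarith
  have hp0 : ∀ x, 0 ≤ p x := by
    intro x
    by_contra hx
    push Not at hx
    have key : ∀ n : ℝ, 0 ≤ n → p x * (-n) ≤ -w := by
      intro n hn
      have := hdom (Pi.single x (-n)) ⟨c0, hc0, fun y => by
        rw [ENNReal.ofReal_of_nonpos]
        · exact zero_le
        · by_cases h : y = x
          · subst h; simpa using hn
          · simp [h]⟩
      simpa [Pi.single_apply] using this
    have := key ((|w| + 1) / (- p x)) (by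
      apply div_nonneg <;> [positivity; linarith])
    have h2 : p x * (-((|w| + 1) / (- p x))) = |w| + 1 := by
      have := hx.ne
      field_simp
    rw [h2] at this
    have := neg_abs_le w
    linarith
  have hS' : ∀ ε : ℝ, 0 < ε → -w < (∑ x, p x) * (r + ε) := by
    intro ε hε
    have := hfS (fun _ => r + ε) (fun x _ => by simp [hε])
    rw [hf, ← Finset.sum_mul] at this; linarith
  have hw0 : 0 ≤ -w := by
    have := hdom 0 ⟨c0, hc0, by simp⟩
    simpa using this
  have hP0 : 0 ≤ ∑ x, p x := Finset.sum_nonneg (fun x _ => hp0 x)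
  have hP : 0 < ∑ x, p x := by
    rcases hP0.lt_or_eq with h | h
    · exact h
    · have := hS' 1 one_pos
      rw [← h] at this; linarith
  set P := ∑ x, p x with hPdef
  have hwr : -w ≤ P * r := by
    refine le_of_forall_pos_lt_add (fun ε hε => ?_)
    have := hS' (ε / P) (by positivity)
    rw [mul_add, mul_div_cancel₀ _ hP.ne'] at this
    exact this
  have hq : ∀ d ∈ D, ∑ x, p x / P * d x ≤ r := by
    intro d hd
    have h1 := (hdom d hd).trans hwr
    have : ∑ x, p x / P * d x = (∑ x, p x * d x) / P := by
      rw [Finset.sum_div]; exact Finset.sum_congr rfl (fun x _ => by ring)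
    rw [this, div_le_iff₀ hP]; linarith
  refine ⟨fun x => p x / P, fun x => div_nonneg (hp0 x) hP.le, ?_, ?_⟩
  · rw [← Finset.sum_div]; exact div_self hP.ne'
  intro u hu
  by_cases hex : ∃ x, u x = ⊤ ∧ 0 < p x
  · exfalso
    obtain ⟨x, hx, hpx⟩ := hex
    have := hq (Pi.single x ((|r| + 1) / (p x / P))) ⟨u, hu, fun y => by
      by_cases h : y = x
      · subst h; simp [hx]
      · simp [h]⟩
    simp only [Pi.single_apply, mul_ite, mul_zero, Finset.sum_ite_eq', Finset.mem_univ,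
      if_true] at this
    rw [mul_div_cancel₀ _ (by positivity)] at this
    have := le_abs_self r
    linarith
  · push Not at hex
    have h1 := hq (fun x => (u x).toReal) ⟨u, hu, fun x => ENNReal.ofReal_toReal_le⟩
    refine le_trans (le_of_eq ?_) (ENNReal.ofReal_le_ofReal h1)
    rw [ENNReal.ofReal_sum_of_nonneg
      (fun x _ => mul_nonneg (div_nonneg (hp0 x) hP.le) ENNReal.toReal_nonneg)]
    refine Finset.sum_congr rfl (fun x _ => ?_)
    rw [ENNReal.ofReal_mul (div_nonneg (hp0 x) hP.le)]
    by_cases hx : u x = ⊤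
    · have : p x = 0 := le_antisymm (hex x hx) (hp0 x)
      simp [this]
    · rw [ENNReal.ofReal_toReal hx]

/-- Minimax equality for bilinear expectations on finite × Polish
spaces; Lemma `lem:minimax`. -/
theorem statement16 [Fintype X] [MeasurableSingletonClass X]
    [TopologicalSpace Y] [PolishSpace Y] [BorelSpace Y]
    (a : ℝ) (b : X × Y → EReal) (hb : ∀ z, (a : EReal) ≤ b z) (hbm : Measurable b)
    (B : Set (Measure Y)) (hBne : B.Nonempty)
    (hBprob : ∀ ν ∈ B, IsProbabilityMeasure ν)
    (hBconv : ∀ ν₁ ∈ B, ∀ ν₂ ∈ B, ∀ t : ℝ, 0 ≤ t → t ≤ 1 →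
      (ENNReal.ofReal t) • ν₁ + (ENNReal.ofReal (1 - t)) • ν₂ ∈ B) :
    (⨅ (QX : Measure X) (_ : IsProbabilityMeasure QX), ⨆ ν ∈ B, bilin a b QX ν) =
      ⨆ ν ∈ B, ⨅ (QX : Measure X) (_ : IsProbabilityMeasure QX), bilin a b QX ν := by
  refine le_antisymm ?_ ?_
  swap
  · refine iSup₂_le fun ν hν => le_iInf₂ fun QX hQX => ?_
    exact (iInf₂_le QX hQX).trans (le_iSup₂ (f := fun ν (_ : ν ∈ B) => bilin a b QX ν) ν hν)
  by_contra hcon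
  push Not at hcon
  obtain ⟨m, hm1, hm2⟩ := EReal.lt_iff_exists_real_btwn.1 hcon
  set c : Measure Y → X → ℝ≥0∞ :=
    fun ν x => ∫⁻ y, er2en (b (x, y) - (a : EReal)) ∂ν with hc
  have hbil : ∀ QX ν, bilin a b QX ν = (a : EReal) + ((∑ x, QX {x} * c ν x : ℝ≥0∞) : EReal) :=
    fun QX ν => rfl
  have hex : ∀ ν ∈ B, ∃ x, c ν x < ENNReal.ofReal (m - a) := by
    intro ν hν
    by_contra hno
    push Not at hno
    have h1 : (m : EReal) ≤ ⨅ (QX : Measure X) (_ : IsProbabilityMeasure QX), bilin a b QX ν := by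
      refine le_iInf₂ fun QX hQX => ?_
      rw [hbil]
      have h2 : ENNReal.ofReal (m - a) ≤ ∑ x, QX {x} * c ν x := by
        calc ENNReal.ofReal (m - a) = ∑ x, QX {x} * ENNReal.ofReal (m - a) := by
              rw [← Finset.sum_mul, sum_measure_singleton]; simp
          _ ≤ _ := by
              gcongr with x
              exact hno x
      have h3 : ((m - a : ℝ) : EReal) ≤ ((ENNReal.ofReal (m - a) : ℝ≥0∞) : EReal) := by
        rw [EReal.coe_ennreal_ofReal]
        exact_mod_cast le_max_left _ _
      calc (m : EReal) = (a : EReal) + ((m - a : ℝ) : EReal) := by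
            rw [← EReal.coe_add]; congr 1; ring
        _ ≤ _ := by
            gcongr
            exact h3.trans (by exact_mod_cast h2)
    have h4 := h1.trans (le_iSup₂ (f := fun ν (_ : ν ∈ B) =>
      ⨅ (QX : Measure X) (_ : IsProbabilityMeasure QX), bilin a b QX ν) ν hν)
    exact absurd h4 (not_le.2 hm1)
  obtain ⟨q, hq0, hq1, hq⟩ := minimax_core (c '' B) (hBne.image c) (by
    rintro _ ⟨ν₁, h₁, rfl⟩ _ ⟨ν₂, h₂, rfl⟩ t ht0 ht1
    refine ⟨_, hBconv ν₁ h₁ ν₂ h₂ t ht0 ht1, ?_⟩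
    funext x
    simp [hc, lintegral_add_measure, lintegral_smul_measure]) (m - a) (by
    rintro _ ⟨ν, hν, rfl⟩
    exact hex ν hν)
  have hma : 0 ≤ m - a := by
    obtain ⟨ν, hν⟩ := hBne
    obtain ⟨x, hx⟩ := hex ν hν
    have := ENNReal.ofReal_pos.1 (lt_of_le_of_lt zero_le hx)
    exact this.le
  set Q : PMF X := PMF.ofFintype (fun x => ENNReal.ofReal (q x)) (by
    rw [← ENNReal.ofReal_sum_of_nonneg (fun x _ => hq0 x), hq1, ENNReal.ofReal_one]) with hQ
  have hfin : (⨅ (QX : Measure X) (_ : IsProbabilityMeasure QX), ⨆ ν ∈ B, bilin a b QX ν)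
      ≤ (m : EReal) := by
    refine (iInf₂_le Q.toMeasure (PMF.toMeasure.isProbabilityMeasure Q)).trans (iSup₂_le fun ν hν => ?_)
    rw [hbil]
    have h2 : ∑ x, Q.toMeasure {x} * c ν x ≤ ENNReal.ofReal (m - a) := by
      refine le_trans (le_of_eq ?_) (hq _ ⟨ν, hν, rfl⟩)
      refine Finset.sum_congr rfl fun x _ => ?_
      rw [PMF.toMeasure_apply_singleton _ _ (measurableSet_singleton x)]
      simp [hQ]
    calc _ ≤ (a : EReal) + ((ENNReal.ofReal (m - a) : ℝ≥0∞) : EReal) := by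
          gcongr
          exact EReal.coe_ennreal_le_coe_ennreal_iff.2 h2
      _ = (m : EReal) := by
          rw [EReal.coe_ennreal_ofReal, max_eq_left hma, ← EReal.coe_add]; congr 1; ring
  exact absurd hfin (not_le.2 hm2)

end BL
end
end

section
/- Lower convex envelopes commute with monotone infimization over orthants: let n ≥ 1, S := [0,∞)ⁿ, and f : S → ℝ. For y ∈ S let S_y := ∏ᵢ [yᵢ, ∞). Then the lower convex envelope of the function y ↦ inf_{x ∈ S_y} f(x) equals the function y ↦ inf_{x ∈ S_y} f̌(x), where f̌ is the lower convex envelope of f on S. The same identity holds when S_y is replaced by ∏ᵢ [0, yᵢ]. -/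
open MeasureTheory ProbabilityTheory Set Filter
open scoped ENNReal NNReal BigOperators Classical Topology

noncomputable section

namespace BL

variable {X : Type*} {Y : Type*} [MeasurableSpace X] [MeasurableSpace Y]

/-- Lower convex envelope on `S = [0,∞)ⁿ`, via convex combinations of `n + 2` points
(Carathéodory). -/
def lceN {n : ℕ} (F : (Fin n → ℝ) → EReal) (y : Fin n → ℝ) : EReal :=
  ⨅ (q : Fin (n + 2) → ℝ) (x : Fin (n + 2) → Fin n → ℝ)
    (_ : ∀ j, 0 ≤ q j) (_ : ∑ j, q j = 1) (_ : ∀ j i, 0 ≤ x j i)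
    (_ : ∀ i, ∑ j, q j * x j i = y i),
    ∑ j, (q j : EReal) * F (x j)

/-- One weighted term: approximate an infimum from above. -/
theorem term_approx {α : Type*} (f : α → ℝ) (P : α → Prop) (hP : ∃ x, P x) (g : EReal)
    (hg : ∀ c : EReal, g < c → ∃ x, P x ∧ (f x : EReal) < c) (q : ℝ) (hq : 0 ≤ q)
    (c : EReal) (hc : (q : EReal) * g < c) : ∃ x, P x ∧ (q : EReal) * (f x : EReal) < c := by
  rcases hq.eq_or_lt with h0 | h0
  · subst h0
    obtain ⟨x, hx⟩ := hP
    exact ⟨x, hx, by simpa using hc⟩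
  · obtain ⟨r, hr1, hr2⟩ := EReal.lt_iff_exists_real_btwn.1 hc
    have hgr : g < ((r / q : ℝ) : EReal) := by
      by_contra hcon
      have h1 : (q : EReal) * ((r / q : ℝ) : EReal) ≤ (q : EReal) * g :=
        mul_le_mul_of_nonneg_left (not_lt.1 hcon) (by exact_mod_cast hq)
      rw [← EReal.coe_mul, mul_div_cancel₀ _ h0.ne'] at h1
      exact absurd hr1 (not_lt.2 h1)
    obtain ⟨x, hx, hfx⟩ := hg _ hgr
    refine ⟨x, hx, lt_trans ?_ hr2⟩
    rw [← EReal.coe_mul]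
    have h2 : f x < r / q := by exact_mod_cast hfx
    rw [lt_div_iff₀ h0] at h2
    exact_mod_cast (by linarith : q * f x < r)

/-- Weighted finite sums of infima are approximated by simultaneous choices. -/
theorem sum_approx {α ι : Type*} (f : α → ℝ) (P : ι → α → Prop) (hP : ∀ j, ∃ x, P j x)
    (g : ι → EReal)
    (hg : ∀ j, ∀ c : EReal, g j < c → ∃ x, P j x ∧ (f x : EReal) < c)
    (q : ι → ℝ) (hq : ∀ j, 0 ≤ q j) (hle : ∀ j x, P j x → g j ≤ (f x : EReal)) (s : Finset ι) :
    (∑ j ∈ s, (q j : EReal) * g j ≠ ⊤) ∧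
    ∀ c : EReal, ∑ j ∈ s, (q j : EReal) * g j < c →
      ∃ x : ι → α, (∀ j, P j (x j)) ∧ ∑ j ∈ s, (q j : EReal) * (f (x j) : EReal) < c := by
  induction s using Finset.induction_on with
  | empty =>
    refine ⟨by simp, fun c hc => ?_⟩
    choose x hx using hP
    exact ⟨x, hx, by simpa using hc⟩
  | insert a s ha ih =>
    obtain ⟨ih1, ih2⟩ := ih
    have hat : (q a : EReal) * g a ≠ ⊤ := by
      obtain ⟨x, hx⟩ := hP a
      have h1 : (q a : EReal) * g a ≤ (q a : EReal) * (f x : EReal) :=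
        mul_le_mul_of_nonneg_left (hle a x hx) (by exact_mod_cast hq a)
      rw [← EReal.coe_mul] at h1
      exact (lt_of_le_of_lt h1 (EReal.coe_lt_top _)).ne
    simp only [Finset.sum_insert ha]
    refine ⟨(EReal.add_lt_top hat ih1).ne, fun c hc => ?_⟩
    obtain ⟨d, hd1, hd2⟩ := exists_between hc
    have : ∃ a' > (q a : EReal) * g a, ∃ b' > ∑ j ∈ s, (q j : EReal) * g j, a' + b' < d := by
      by_contra! hcon
      exact absurd hd1 (not_lt.2 (EReal.le_add_of_forall_gt (.inr ih1) (.inl hat) hcon))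
    obtain ⟨a', ha', b', hb', hab⟩ := this
    obtain ⟨x, hx, hxs⟩ := ih2 b' hb'
    obtain ⟨z, hz, hzs⟩ := term_approx f (P a) (hP a) (g a) (hg a) (q a) (hq a) a' ha'
    refine ⟨Function.update x a z, fun j => ?_, ?_⟩
    · by_cases hj : j = a
      · subst hj; simpa using hz
      · simpa [hj] using hx j
    · have hs : ∑ j ∈ s, (q j : EReal) * (f (Function.update x a z j) : EReal)
          = ∑ j ∈ s, (q j : EReal) * (f (x j) : EReal) := by
        refine Finset.sum_congr rfl fun j hj => ?_
        have : j ≠ a := fun h => ha (h ▸ hj)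
        simp [this]
      rw [hs]
      simp only [Function.update_self]
      exact (add_le_add hzs.le hxs.le).trans_lt (hab.trans hd2)

theorem lceN_le {n : ℕ} (F : (Fin n → ℝ) → EReal) (y : Fin n → ℝ)
    (q : Fin (n + 2) → ℝ) (x : Fin (n + 2) → Fin n → ℝ)
    (h1 : ∀ j, 0 ≤ q j) (h2 : ∑ j, q j = 1) (h3 : ∀ j i, 0 ≤ x j i)
    (h4 : ∀ i, ∑ j, q j * x j i = y i) : lceN F y ≤ ∑ j, (q j : EReal) * F (x j) :=
  iInf_le_of_le q <| iInf_le_of_le x <| iInf_le_of_le h1 <| iInf_le_of_le h2 <|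
    iInf_le_of_le h3 <| iInf_le_of_le h4 le_rfl

theorem sum_mono {n : ℕ} (q : Fin n → ℝ) (hq : ∀ j, 0 ≤ q j) (u v : Fin n → EReal)
    (h : ∀ j, u j ≤ v j) : ∑ j, (q j : EReal) * u j ≤ ∑ j, (q j : EReal) * v j :=
  Finset.sum_le_sum fun j _ => mul_le_mul_of_nonneg_left (h j) (by exact_mod_cast hq j)

/-- Lower convex envelopes commute with monotone infimization over
orthants; Lemma `lem:exchange`. -/
theorem statement17 (n : ℕ) (hn : 1 ≤ n) (f : (Fin n → ℝ) → ℝ) :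
    (∀ y : Fin n → ℝ, (∀ i, 0 ≤ y i) →
      lceN (fun z => ⨅ (x : Fin n → ℝ) (_ : ∀ i, z i ≤ x i), ((f x : ℝ) : EReal)) y =
        ⨅ (x : Fin n → ℝ) (_ : ∀ i, y i ≤ x i), lceN (fun z => ((f z : ℝ) : EReal)) x) ∧
    (∀ y : Fin n → ℝ, (∀ i, 0 ≤ y i) →
      lceN (fun z =>
          ⨅ (x : Fin n → ℝ) (_ : ∀ i, 0 ≤ x i) (_ : ∀ i, x i ≤ z i),
            ((f x : ℝ) : EReal)) y =
        ⨅ (x : Fin n → ℝ) (_ : ∀ i, 0 ≤ x i) (_ : ∀ i, x i ≤ y i),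
          lceN (fun z => ((f z : ℝ) : EReal)) x) := by
  constructor
  · intro y hy
    apply le_antisymm
    · refine le_iInf₂ fun x hx => ?_
      conv_rhs => unfold lceN
      refine le_iInf fun q => le_iInf fun w => le_iInf fun h1 => le_iInf fun h2 =>
        le_iInf fun h3 => le_iInf fun h4 => ?_
      have hr0 : ∀ i, 0 ≤ y i / x i := fun i => div_nonneg (hy i) ((hy i).trans (hx i))
      have hr1 : ∀ i, y i / x i ≤ 1 := fun i => div_le_one_of_le₀ (hx i) ((hy i).trans (hx i))
      refine (lceN_le _ y q (fun j i => w j i * (y i / x i)) h1 h2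
        (fun j i => mul_nonneg (h3 j i) (hr0 i)) ?_).trans ?_
      · intro i
        simp_rw [← mul_assoc]
        rw [← Finset.sum_mul, h4 i]
        by_cases h0 : x i = 0
        · have := hx i
          have := hy i
          rw [h0]; linarith
        · field_simp
      · exact sum_mono q h1 _ _ fun j => iInf₂_le (w j)
          fun i => mul_le_of_le_one_right (h3 j i) (hr1 i)
    · conv_rhs => unfold lceN
      refine le_iInf fun q => le_iInf fun w => le_iInf fun h1 => le_iInf fun h2 =>
        le_iInf fun h3 => le_iInf fun h4 => ?_
      refine le_of_forall_gt_imp_ge_of_dense fun c hc => ?_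
      obtain ⟨x, hx, hxc⟩ := (sum_approx f (fun j x => ∀ i, w j i ≤ x i)
        (fun j => ⟨w j, fun i => le_rfl⟩) _
        (fun j c hc => by simpa only [iInf_lt_iff, exists_prop] using hc) q h1
        (fun j x hx => iInf₂_le x hx) Finset.univ).2 c hc
      refine le_trans ?_ hxc.le
      refine iInf₂_le_of_le (fun i => ∑ j, q j * x j i) (fun i => ?_)
        (lceN_le _ _ q x h1 h2 (fun j i => (h3 j i).trans (hx j i)) fun i => rfl)
      rw [← h4 i]
      exact Finset.sum_le_sum fun j _ => mul_le_mul_of_nonneg_left (hx j i) (h1 j)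
  · intro y hy
    apply le_antisymm
    · refine le_iInf fun x => le_iInf fun hx0 => le_iInf fun hx => ?_
      conv_rhs => unfold lceN
      refine le_iInf fun q => le_iInf fun w => le_iInf fun h1 => le_iInf fun h2 =>
        le_iInf fun h3 => le_iInf fun h4 => ?_
      refine (lceN_le _ y q (fun j i => w j i + (y i - x i)) h1 h2
        (fun j i => add_nonneg (h3 j i) (sub_nonneg.2 (hx i))) ?_).trans ?_
      · intro i
        simp_rw [mul_add]
        rw [Finset.sum_add_distrib, ← Finset.sum_mul, h4 i, h2]
        ring
      · exact sum_mono q h1 _ _ fun j => iInf_le_of_le (w j) <| iInf₂_le (h3 j)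
          fun i => le_add_of_nonneg_right (sub_nonneg.2 (hx i))
    · conv_rhs => unfold lceN
      refine le_iInf fun q => le_iInf fun w => le_iInf fun h1 => le_iInf fun h2 =>
        le_iInf fun h3 => le_iInf fun h4 => ?_
      refine le_of_forall_gt_imp_ge_of_dense fun c hc => ?_
      obtain ⟨x, hx, hxc⟩ := (sum_approx f (fun j x => (∀ i, 0 ≤ x i) ∧ ∀ i, x i ≤ w j i)
        (fun j => ⟨w j, h3 j, fun i => le_rfl⟩) _
        (fun j c hc => by simpa only [iInf_lt_iff, exists_prop, and_assoc] using hc) q h1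
        (fun j x hx => iInf_le_of_le x <| iInf₂_le hx.1 hx.2) Finset.univ).2 c hc
      refine le_trans ?_ hxc.le
      refine iInf_le_of_le (fun i => ∑ j, q j * x j i) <| iInf₂_le_of_le
        (fun i => Finset.sum_nonneg fun j _ => mul_nonneg (h1 j) ((hx j).1 i)) (fun i => ?_)
        (lceN_le _ _ q x h1 h2 (fun j i => (hx j).1 i) fun i => rfl)
      rw [← h4 i]
      exact Finset.sum_le_sum fun j _ => mul_le_mul_of_nonneg_left ((hx j).2 i) (h1 j)

end BL
end
end

section
/- Min of coupled relative entropies equals the coupled min (Lemma on η): let P_{XY} be a probability measure on 𝒳 × 𝒴, let R_{X₁}, R_{X₂} be probability measures on 𝒳, R_{Y₁}, R_{Y₂} probability measures on 𝒴, and b_{i,j} ∈ ℝ for i, j ∈ {1,2}. Then min over i, j ∈ {1,2} of [𝔻(R_{X_i}, R_{Y_j} ‖ P_{XY}) + b_{i,j}] equals the infimum over all probability measures R on 𝒳 × 𝒴 × 𝒳 × 𝒴 whose four coordinate marginals are R_{X₁}, R_{Y₁}, R_{X₂}, R_{Y₂} (in this order) of min over i, j ∈ {1,2} of [D(R_{X_i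 Y_j} ‖ P_{XY}) + b_{i,j}], where R_{X_i Y_j} denotes the joint marginal of R on the i-th 𝒳-coordinate and the j-th 𝒴-coordinate. -/
open MeasureTheory ProbabilityTheory Set Filter
open scoped ENNReal NNReal BigOperators Classical Topology

noncomputable section

namespace BL

variable {X : Type*} {Y : Type*} [MeasurableSpace X] [MeasurableSpace Y]

/-- An upper bound for `Dmin + b`, from an upper bound for each coupling. -/
theorem le_Dmin_add {QX : Measure X} {QY : Measure Y} {P : Measure (X × Y)} {b : ℝ} {c : EReal}
    (h : ∀ π ∈ couplings QX QY, c ≤ KL π P + (b : EReal)) : c ≤ Dmin QX QY P + (b : EReal) := by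
  rw [← EReal.sub_le_iff_le_add (Or.inl (EReal.coe_ne_bot b)) (Or.inl (EReal.coe_ne_top b))]
  refine le_iInf₂ fun π hπ => ?_
  rw [EReal.sub_le_iff_le_add (Or.inl (EReal.coe_ne_bot b)) (Or.inl (EReal.coe_ne_top b))]
  exact h π hπ

theorem map_of_factor {A B C D : Type*} [MeasurableSpace A] [MeasurableSpace B]
    [MeasurableSpace C] [MeasurableSpace D] {ρ : Measure A} {g : A → B} {f : B → C}
    {q : A → D} {p : D → C} {σ : Measure D} {τ : Measure C}
    (hg : Measurable g) (hf : Measurable f) (hq : Measurable q) (hp : Measurable p)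
    (h : ∀ a, f (g a) = p (q a)) (hσ : ρ.map q = σ) (hτ : σ.map p = τ) :
    (ρ.map g).map f = τ := by
  rw [Measure.map_map hf hg, ← hτ, ← hσ, Measure.map_map hp hq]
  congr 1
  exact funext h

/-- Min of coupled relative entropies equals the coupled min;
Lemma `lem:eta`. -/
theorem statement18 [TopologicalSpace X] [PolishSpace X] [BorelSpace X]
    [TopologicalSpace Y] [PolishSpace Y] [BorelSpace Y]
    (P : Measure (X × Y)) [IsProbabilityMeasure P]
    (RX1 RX2 : Measure X) (RY1 RY2 : Measure Y)
    [IsProbabilityMeasure RX1] [IsProbabilityMeasure RX2]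
    [IsProbabilityMeasure RY1] [IsProbabilityMeasure RY2]
    (b11 b12 b21 b22 : ℝ) :
    min (min (Dmin RX1 RY1 P + (b11 : EReal)) (Dmin RX1 RY2 P + (b12 : EReal)))
        (min (Dmin RX2 RY1 P + (b21 : EReal)) (Dmin RX2 RY2 P + (b22 : EReal))) =
      ⨅ (R : Measure (X × Y × X × Y)) (_ : IsProbabilityMeasure R)
        (_ : R.map (fun z => z.1) = RX1) (_ : R.map (fun z => z.2.1) = RY1)
        (_ : R.map (fun z => z.2.2.1) = RX2) (_ : R.map (fun z => z.2.2.2) = RY2),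
        min (min (KL (R.map fun z => (z.1, z.2.1)) P + (b11 : EReal))
                 (KL (R.map fun z => (z.1, z.2.2.2)) P + (b12 : EReal)))
            (min (KL (R.map fun z => (z.2.2.1, z.2.1)) P + (b21 : EReal))
                 (KL (R.map fun z => (z.2.2.1, z.2.2.2)) P + (b22 : EReal))) := by
  apply le_antisymm
  · refine le_iInf fun R => le_iInf fun hR => le_iInf fun h1 => le_iInf fun h2 =>
      le_iInf fun h3 => le_iInf fun h4 => ?_
    refine min_le_min (min_le_min ?_ ?_) (min_le_min ?_ ?_) <;>
    · refine add_le_add_left (iInf₂_le _ ⟨Measure.isProbabilityMeasure_map (by fun_prop), ?_, ?_⟩) _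
      all_goals
        rw [Measure.map_map (by fun_prop) (by fun_prop)]
        assumption
  refine le_min (le_min ?_ ?_) (le_min ?_ ?_)
  · refine le_Dmin_add fun π hπ => ?_
    obtain ⟨hπp, hπ1, hπ2⟩ := hπ
    have hg : Measurable (fun w : (X × Y) × (X × Y) =>
      ((w.1.1, w.1.2, w.2.1, w.2.2) : X × Y × X × Y)) := by fun_prop
    have hρ1 : (π.prod (RX2.prod RY2)).map Prod.fst = π := by simp
    have hρ2 : (π.prod (RX2.prod RY2)).map Prod.snd = RX2.prod RY2 := by simp
    have hk : ((π.prod (RX2.prod RY2)).map (fun w : (X × Y) × (X × Y) =>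
      ((w.1.1, w.1.2, w.2.1, w.2.2) : X × Y × X × Y))).map (fun z : X × Y × X × Y => (z.1, z.2.1)) = π := by
      rw [Measure.map_map (by fun_prop) hg]
      exact hρ1
    refine iInf_le_of_le ((π.prod (RX2.prod RY2)).map (fun w : (X × Y) × (X × Y) =>
      ((w.1.1, w.1.2, w.2.1, w.2.2) : X × Y × X × Y))) ?_
    refine iInf_le_of_le (Measure.isProbabilityMeasure_map hg.aemeasurable) ?_
    refine iInf_le_of_le (map_of_factor hg (by fun_prop) (q := Prod.fst) (p := Prod.fst)
        (by fun_prop) (by fun_prop) (fun _ => rfl) (hρ1) (hπ1)) ?_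
    refine iInf_le_of_le (map_of_factor hg (by fun_prop) (q := Prod.fst) (p := Prod.snd)
        (by fun_prop) (by fun_prop) (fun _ => rfl) (hρ1) (hπ2)) ?_
    refine iInf_le_of_le (map_of_factor hg (by fun_prop) (q := Prod.snd) (p := Prod.fst)
        (by fun_prop) (by fun_prop) (fun _ => rfl) (hρ2) (by simp)) ?_
    refine iInf_le_of_le (map_of_factor hg (by fun_prop) (q := Prod.snd) (p := Prod.snd)
        (by fun_prop) (by fun_prop) (fun _ => rfl) (hρ2) (by simp)) ?_
    refine ((min_le_left _ _).trans (min_le_left _ _)).trans ?_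
    exact (congrArg (fun m => KL m P + _) hk).le
  · refine le_Dmin_add fun π hπ => ?_
    obtain ⟨hπp, hπ1, hπ2⟩ := hπ
    have hg : Measurable (fun w : (X × Y) × (X × Y) =>
      ((w.1.1, w.2.2, w.2.1, w.1.2) : X × Y × X × Y)) := by fun_prop
    have hρ1 : (π.prod (RX2.prod RY1)).map Prod.fst = π := by simp
    have hρ2 : (π.prod (RX2.prod RY1)).map Prod.snd = RX2.prod RY1 := by simp
    have hk : ((π.prod (RX2.prod RY1)).map (fun w : (X × Y) × (X × Y) =>
      ((w.1.1, w.2.2, w.2.1, w.1.2) : X × Y × X × Y))).map (fun z : X × Y × X × Y => (z.1, z.2.2.2)) = π := by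
      rw [Measure.map_map (by fun_prop) hg]
      exact hρ1
    refine iInf_le_of_le ((π.prod (RX2.prod RY1)).map (fun w : (X × Y) × (X × Y) =>
      ((w.1.1, w.2.2, w.2.1, w.1.2) : X × Y × X × Y))) ?_
    refine iInf_le_of_le (Measure.isProbabilityMeasure_map hg.aemeasurable) ?_
    refine iInf_le_of_le (map_of_factor hg (by fun_prop) (q := Prod.fst) (p := Prod.fst)
        (by fun_prop) (by fun_prop) (fun _ => rfl) (hρ1) (hπ1)) ?_
    refine iInf_le_of_le (map_of_factor hg (by fun_prop) (q := Prod.snd) (p := Prod.snd)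
        (by fun_prop) (by fun_prop) (fun _ => rfl) (hρ2) (by simp)) ?_
    refine iInf_le_of_le (map_of_factor hg (by fun_prop) (q := Prod.snd) (p := Prod.fst)
        (by fun_prop) (by fun_prop) (fun _ => rfl) (hρ2) (by simp)) ?_
    refine iInf_le_of_le (map_of_factor hg (by fun_prop) (q := Prod.fst) (p := Prod.snd)
        (by fun_prop) (by fun_prop) (fun _ => rfl) (hρ1) (hπ2)) ?_
    refine ((min_le_left _ _).trans (min_le_right _ _)).trans ?_
    exact (congrArg (fun m => KL m P + _) hk).le
  · refine le_Dmin_add fun π hπ => ?_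
    obtain ⟨hπp, hπ1, hπ2⟩ := hπ
    have hg : Measurable (fun w : (X × Y) × (X × Y) =>
      ((w.2.1, w.1.2, w.1.1, w.2.2) : X × Y × X × Y)) := by fun_prop
    have hρ1 : (π.prod (RX1.prod RY2)).map Prod.fst = π := by simp
    have hρ2 : (π.prod (RX1.prod RY2)).map Prod.snd = RX1.prod RY2 := by simp
    have hk : ((π.prod (RX1.prod RY2)).map (fun w : (X × Y) × (X × Y) =>
      ((w.2.1, w.1.2, w.1.1, w.2.2) : X × Y × X × Y))).map (fun z : X × Y × X × Y => (z.2.2.1, z.2.1)) = π := by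
      rw [Measure.map_map (by fun_prop) hg]
      exact hρ1
    refine iInf_le_of_le ((π.prod (RX1.prod RY2)).map (fun w : (X × Y) × (X × Y) =>
      ((w.2.1, w.1.2, w.1.1, w.2.2) : X × Y × X × Y))) ?_
    refine iInf_le_of_le (Measure.isProbabilityMeasure_map hg.aemeasurable) ?_
    refine iInf_le_of_le (map_of_factor hg (by fun_prop) (q := Prod.snd) (p := Prod.fst)
        (by fun_prop) (by fun_prop) (fun _ => rfl) (hρ2) (by simp)) ?_
    refine iInf_le_of_le (map_of_factor hg (by fun_prop) (q := Prod.fst) (p := Prod.snd)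
        (by fun_prop) (by fun_prop) (fun _ => rfl) (hρ1) (hπ2)) ?_
    refine iInf_le_of_le (map_of_factor hg (by fun_prop) (q := Prod.fst) (p := Prod.fst)
        (by fun_prop) (by fun_prop) (fun _ => rfl) (hρ1) (hπ1)) ?_
    refine iInf_le_of_le (map_of_factor hg (by fun_prop) (q := Prod.snd) (p := Prod.snd)
        (by fun_prop) (by fun_prop) (fun _ => rfl) (hρ2) (by simp)) ?_
    refine ((min_le_right _ _).trans (min_le_left _ _)).trans ?_
    exact (congrArg (fun m => KL m P + _) hk).le
  · refine le_Dmin_add fun π hπ => ?_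
    obtain ⟨hπp, hπ1, hπ2⟩ := hπ
    have hg : Measurable (fun w : (X × Y) × (X × Y) =>
      ((w.2.1, w.2.2, w.1.1, w.1.2) : X × Y × X × Y)) := by fun_prop
    have hρ1 : (π.prod (RX1.prod RY1)).map Prod.fst = π := by simp
    have hρ2 : (π.prod (RX1.prod RY1)).map Prod.snd = RX1.prod RY1 := by simp
    have hk : ((π.prod (RX1.prod RY1)).map (fun w : (X × Y) × (X × Y) =>
      ((w.2.1, w.2.2, w.1.1, w.1.2) : X × Y × X × Y))).map (fun z : X × Y × X × Y => (z.2.2.1, z.2.2.2)) = π := by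
      rw [Measure.map_map (by fun_prop) hg]
      exact hρ1
    refine iInf_le_of_le ((π.prod (RX1.prod RY1)).map (fun w : (X × Y) × (X × Y) =>
      ((w.2.1, w.2.2, w.1.1, w.1.2) : X × Y × X × Y))) ?_
    refine iInf_le_of_le (Measure.isProbabilityMeasure_map hg.aemeasurable) ?_
    refine iInf_le_of_le (map_of_factor hg (by fun_prop) (q := Prod.snd) (p := Prod.fst)
        (by fun_prop) (by fun_prop) (fun _ => rfl) (hρ2) (by simp)) ?_
    refine iInf_le_of_le (map_of_factor hg (by fun_prop) (q := Prod.snd) (p := Prod.snd)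
        (by fun_prop) (by fun_prop) (fun _ => rfl) (hρ2) (by simp)) ?_
    refine iInf_le_of_le (map_of_factor hg (by fun_prop) (q := Prod.fst) (p := Prod.fst)
        (by fun_prop) (by fun_prop) (fun _ => rfl) (hρ1) (hπ1)) ?_
    refine iInf_le_of_le (map_of_factor hg (by fun_prop) (q := Prod.fst) (p := Prod.snd)
        (by fun_prop) (by fun_prop) (fun _ => rfl) (hρ1) (hπ2)) ?_
    refine ((min_le_right _ _).trans (min_le_right _ _)).trans ?_
    exact (congrArg (fun m => KL m P + _) hk).le

end BL
end
end
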